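/- Let J : ℝ → [0,∞) be a strictly convex function, and let g : ℝ → [0,∞) be a measurable 2π-periodic function with g ∈ L¹(−π,π), g = g^{*per}, and g strictly decreasing on (0,π). Let u, v : (−π,π) → [0,∞) be nonnegative measurable functions with ∫_{−π}^{π}∫_{−π}^{π} J(u(x) − v(y)) g(x−y) dx dy finite. Then equality ∫∫ J(u^{*}(x) − v^{*}(y)) g(x−y) dx dy = ∫∫ J(u(x) − v(y)) g(x−y) dx dy holds if and only if one of the following holds: (i) u is constant almost everywhere in (−π,π) or v is constant almost everywhere in (−π,π); (ii) extending u and v to ℝ in a 2π-periodic way, there exists z ∈ ℝ such that u(x) = u^{*per}(x+z) and v(y) = v^{*per}(y+z) for almost every x, y ∈ ℝ. -/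

import Mathlib

open MeasureTheory Real

/-- For a measurable set `A ⊂ ℝ` of finite measure, `A^* := (−|A|/2, |A|/2)`. -/
noncomputable def symmSet (A : Set ℝ) : Set ℝ :=
  Set.Ioo (-((volume A).toReal / 2)) ((volume A).toReal / 2)

/-- Symmetric decreasing rearrangement of a (nonnegative) function on `(−π,π)`:
`u^*(x) := ∫₀^∞ χ_{{u>t}^*}(x) dt`. -/
noncomputable def symmRearr (u : ℝ → ℝ) : ℝ → ℝ := fun x =>
  ∫ t in Set.Ioi (0 : ℝ),
    (symmSet {y | y ∈ Set.Ioo (-π) π ∧ t < u y}).indicator (fun _ => (1 : ℝ)) x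

/-- The `2π`-periodic extension of (the restriction to `[−π,π)` of) a function. -/
noncomputable def periodize (f : ℝ → ℝ) : ℝ → ℝ := fun x =>
  f (x - 2 * π * (⌊(x + π) / (2 * π)⌋ : ℝ))

/-- The periodic rearrangement `f^{*per}`: the `2π`-periodic extension of `(f·χ_{(−π,π)})^*`. -/
noncomputable def perRearr (f : ℝ → ℝ) : ℝ → ℝ := periodize (symmRearr f)

/-!
The polarization of a function across a reflection of the circle puts the larger of the values at
two mirror points on a chosen side. For a pair of functions the energy is a sum over orbits of four
points, and strict convexity of `J` together with strict monotonicity of `g` shows that polarizing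
both functions lowers the contribution of an orbit, strictly when the two functions are ordered
oppositely there. The rearranged pair is an almost everywhere limit of successive polarizations of
the given pair, and also of the pair polarized across any one reflection. So if rearranging does not
change a finite energy, then for every reflection and almost every `(x, y)`, the values of `u` at
`x` and its mirror image are not ordered oppositely to those of `v` at `y` and its mirror image.

Integrated over the circle, the signed difference of a function across the reflection fixing `c` is
a multiple of a component of its first Fourier coefficient (bounded functions may be assumed, since
only the order of the values matters). If the coefficient of one function vanishes, every reflection
leaves one of the two functions invariant, and since a divisible group is not the union of two
cosets of proper subgroups, one of them is constant. Otherwise the two coefficients point in the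
same direction `z`, across every reflection both functions are larger on the side of `z`, and both
are translates by `z` of their rearrangements.
-/

namespace CircleRearrangement

open Filter Topology Set ProbabilityTheory
open scoped ENNReal

instance factTwoPiPos : Fact (0 < 2 * π) := ⟨two_pi_pos⟩

/-- The circle `ℝ / 2πℤ`, with its Haar measure of total mass `2π`. -/
abbrev Circ := AddCircle (2 * π)

/-- The cosine of a point of the circle. -/
noncomputable def circCos (x : Circ) : ℝ := Real.Angle.cos x

/-- The sine of a point of the circle. -/
noncomputable def circSin (x : Circ) : ℝ := Real.Angle.sin x

/-- The reflection of the circle that fixes `c` (and `c + π`). -/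
noncomputable def reflect (c x : Circ) : Circ := c + c - x

section Circle

variable {x y c : Circ}

@[simp] lemma circCos_coe (r : ℝ) : circCos r = Real.cos r := Real.Angle.cos_coe r

@[simp] lemma circSin_coe (r : ℝ) : circSin r = Real.sin r := Real.Angle.sin_coe r

lemma continuous_circCos : Continuous circCos := Real.Angle.continuous_cos

lemma continuous_circSin : Continuous circSin := Real.Angle.continuous_sin

lemma measurable_circSin : Measurable circSin := continuous_circSin.measurable

lemma circCos_add (x y : Circ) :
    circCos (x + y) = circCos x * circCos y - circSin x * circSin y := Real.Angle.cos_add x y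

lemma circSin_add (x y : Circ) :
    circSin (x + y) = circSin x * circCos y + circCos x * circSin y := Real.Angle.sin_add x y

lemma circCos_neg (x : Circ) : circCos (-x) = circCos x := Real.Angle.cos_neg x

lemma circSin_neg (x : Circ) : circSin (-x) = -circSin x := Real.Angle.sin_neg x

lemma circSin_eq_zero_iff : circSin x = 0 ↔ x = 0 ∨ x = (π : ℝ) := Real.Angle.sin_eq_zero_iff

lemma abs_circSin_le_one (x : Circ) : |circSin x| ≤ 1 := by
  induction x using QuotientAddGroup.induction_on with
  | H r => exact (circSin_coe r).symm ▸ Real.abs_sin_le_one r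

lemma exists_add_self_eq (b : Circ) : ∃ c : Circ, c + c = b := by
  induction b using QuotientAddGroup.induction_on with
  | H r => exact ⟨(r / 2 : ℝ), by rw [← AddCircle.coe_add, add_halves]⟩

@[simp] lemma reflect_reflect (c x : Circ) : reflect c (reflect c x) = x := by simp [reflect]

lemma reflect_sub_self (c x : Circ) : reflect c x - c = -(x - c) := by
  unfold reflect; abel

lemma circCos_sub_sub_circCos_sub_reflect (c x y : Circ) :
    circCos (x - y) - circCos (x - reflect c y) = 2 * circSin (x - c) * circSin (y - c) := by
  rw [show x - y = (x - c) + -(y - c) by abel,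
    show x - reflect c y = (x - c) + (y - c) by unfold reflect; abel,
    circCos_add, circCos_add, circCos_neg, circSin_neg]
  ring

lemma circSin_reflect_sub (c x : Circ) : circSin (reflect c x - c) = -circSin (x - c) := by
  rw [reflect_sub_self, circSin_neg]

lemma coe_pi_add_coe_pi : ((π : ℝ) : Circ) + (π : ℝ) = 0 := by
  rw [← AddCircle.coe_add, ← two_mul, AddCircle.coe_period]

lemma reflect_eq_self (h : circSin (x - c) = 0) : reflect c x = x := by
  rcases circSin_eq_zero_iff.mp h with h | h
  · rw [reflect, ← sub_eq_zero.mp h, add_sub_cancel_right]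
  · rw [eq_add_of_sub_eq h, reflect, sub_eq_iff_eq_add,
      show (π : ℝ) + c + ((π : ℝ) + c) = ((π : ℝ) : Circ) + (π : ℝ) + (c + c) by abel,
      coe_pi_add_coe_pi, zero_add]

lemma circCos_eq_cos_norm (x : Circ) : circCos x = Real.cos ‖x‖ := by
  induction x using QuotientAddGroup.induction_on with
  | H r =>
    exact (circCos_coe r).trans
      (by rw [AddCircle.norm_eq, Real.cos_abs, Real.cos_sub_int_mul_two_pi])

lemma abs_circCos_le_one (x : Circ) : |circCos x| ≤ 1 :=
  (circCos_eq_cos_norm x).symm ▸ Real.abs_cos_le_one _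

lemma norm_le_pi (x : Circ) : ‖x‖ ≤ π := by
  have half_period := AddCircle.norm_le_half_period (2 * π) (x := x) two_pi_pos.ne'
  rwa [abs_of_pos two_pi_pos, mul_div_cancel_left₀ _ two_ne_zero] at half_period

lemma circCos_lt_circCos_iff : circCos x < circCos y ↔ ‖y‖ < ‖x‖ := by
  rw [circCos_eq_cos_norm, circCos_eq_cos_norm]
  exact strictAntiOn_cos.lt_iff_gt ⟨norm_nonneg _, norm_le_pi _⟩ ⟨norm_nonneg _, norm_le_pi _⟩

lemma circCos_le_circCos_iff : circCos x ≤ circCos y ↔ ‖y‖ ≤ ‖x‖ := by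
  rw [← not_lt, circCos_lt_circCos_iff, not_lt]

lemma norm_mem_Ioo_of_circSin_ne_zero (h : circSin x ≠ 0) : ‖x‖ ∈ Ioo 0 π := by
  have sin_norm_sq : Real.sin ‖x‖ ^ 2 = circSin x ^ 2 := by
    rw [Real.sin_sq, ← circCos_eq_cos_norm, ← Real.Angle.cos_sq_add_sin_sq x]
    simp only [circCos, circSin]; ring
  have sin_norm_ne_zero : Real.sin ‖x‖ ≠ 0 := fun h0 ↦ h (by simpa [h0] using sin_norm_sq.symm)
  refine ⟨norm_pos_iff.mpr ?_, (norm_le_pi x).lt_of_ne fun hx ↦ ?_⟩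
  · rintro rfl; simp at sin_norm_ne_zero
  · rw [hx, Real.sin_pi] at sin_norm_ne_zero; exact sin_norm_ne_zero rfl

lemma measurePreserving_reflect (c : Circ) : MeasurePreserving (reflect c) :=
  Measure.measurePreserving_sub_left _ _

lemma measurable_reflect (c : Circ) : Measurable (reflect c) :=
  (measurePreserving_reflect c).measurable

lemma integrable_comp_reflect {F : Circ → ℝ} (hF : Integrable F) (c : Circ) :
    Integrable fun x ↦ F (reflect c x) :=
  hF.comp_sub_left (c + c)

lemma integral_comp_reflect (F : Circ → ℝ) (c : Circ) : ∫ x, F (reflect c x) = ∫ x, F x :=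
  integral_sub_left_eq_self F volume (c + c)

instance nullSingletonClassCirc : NullSingletonClass (volume : Measure Circ) where
  measure_singleton x := by
    simpa [two_pi_pos.le] using AddCircle.volume_closedBall (2 * π) (x := x) 0

lemma ae_ne (a : Circ) : ∀ᵐ x : Circ, x ≠ a := by
  simp [ae_iff]

lemma ae_circSin_sub_ne_zero (c : Circ) : ∀ᵐ x : Circ, circSin (x - c) ≠ 0 := by
  filter_upwards [ae_ne c, ae_ne ((π : ℝ) + c)] with x ne_c ne_pi_add_c h
  rcases circSin_eq_zero_iff.mp h with h | h
  · exact ne_c (sub_eq_zero.mp h)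
  · exact ne_pi_add_c (eq_add_of_sub_eq h)

lemma volume_setOf_norm_lt (r : ℝ) :
    volume {x : Circ | ‖x‖ < r} = ENNReal.ofReal (min (2 * π) (2 * r)) := by
  have setOf_eq_ball : {x : Circ | ‖x‖ < r} = Metric.ball 0 r := by ext; simp
  rw [setOf_eq_ball, ← AddCircle.volume_closedBall (x := 0),
    measure_congr AddCircle.closedBall_ae_eq_ball]

end Circle

/-- The measure of the set of levels that `f` crosses upwards and `k` crosses downwards on the way
from `x` to `y`. -/
noncomputable def crossing {α : Type*} (f k : α → ℝ) (x y : α) : ℝ≥0∞ :=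
  volume (Ico (f x) (f y) ∩ Ico (k y) (k x))

section Equimeasurable

variable {α : Type*} [MeasurableSpace α] {μ : Measure α} {f k : α → ℝ}

lemma measurableSet_setOf_mem_Ico (hf : Measurable f) (hk : Measurable k) :
    MeasurableSet {p : α × ℝ | p.2 ∈ Ico (f p.1) (k p.1)} :=
  (measurableSet_le (hf.comp measurable_fst) measurable_snd).inter
    (measurableSet_lt measurable_snd (hk.comp measurable_fst))

lemma lintegral_measure_Ico [SFinite μ] (hf : Measurable f) (hk : Measurable k) (ν : Measure ℝ)
    [SFinite ν] : ∫⁻ x, ν (Ico (f x) (k x)) ∂μ = ∫⁻ t, μ {x | t ∈ Ico (f x) (k x)} ∂ν :=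
  (Measure.prod_apply (measurableSet_setOf_mem_Ico hf hk)).symm.trans
    (Measure.prod_apply_symm (measurableSet_setOf_mem_Ico hf hk))

lemma measurable_measure_setOf_mem_Ico [SFinite μ] (hf : Measurable f) (hk : Measurable k) :
    Measurable fun t ↦ μ {x | t ∈ Ico (f x) (k x)} :=
  measurable_measure_prodMk_right (measurableSet_setOf_mem_Ico hf hk)

lemma lintegral_crossing [SFinite μ] (hf : Measurable f) (hk : Measurable k) :
    ∫⁻ x, ∫⁻ y, crossing f k x y ∂μ ∂μ =
      ∫⁻ t, μ {x | t ∈ Ico (k x) (f x)} * μ {x | t ∈ Ico (f x) (k x)} := by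
  have crossing_eq (x y : α) :
      crossing f k x y = volume.restrict (Ico (f x) (k x)) (Ico (k y) (f y)) := by
    rw [Measure.restrict_apply measurableSet_Ico, crossing, Ico_inter_Ico, Ico_inter_Ico,
      sup_comm, inf_comm]
  simp only [crossing_eq, lintegral_measure_Ico hk hf]
  simp only [← withDensity_apply _ measurableSet_Ico]
  rw [lintegral_measure_Ico hf hk, lintegral_withDensity_eq_lintegral_mul _
    (measurable_measure_setOf_mem_Ico hk hf) (measurable_measure_setOf_mem_Ico hf hk)]
  rfl

lemma edist_eq_volume_Ico_add_volume_Ico (a b : ℝ) :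
    edist a b = volume (Ico a b) + volume (Ico b a) := by
  rw [Real.volume_Ico, Real.volume_Ico, edist_dist, Real.dist_eq]
  rcases le_total a b with h | h
  · rw [ENNReal.ofReal_of_nonpos (sub_nonpos.mpr h), add_zero, abs_sub_comm,
      abs_of_nonneg (sub_nonneg.mpr h)]
  · rw [ENNReal.ofReal_of_nonpos (sub_nonpos.mpr h), zero_add, abs_of_nonneg (sub_nonneg.mpr h)]

lemma sq_lintegral_le_measure_univ_mul {m : α → ℝ≥0∞} (hm : AEMeasurable m μ) :
    (∫⁻ x, m x ∂μ) ^ 2 ≤ μ univ * ∫⁻ x, m x ^ 2 ∂μ := by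
  have hölder := ENNReal.lintegral_mul_le_Lp_mul_Lq μ .two_two (f := fun _ ↦ 1)
    aemeasurable_const hm
  simp only [Pi.mul_apply, one_mul, ENNReal.one_rpow, lintegral_one] at hölder
  calc (∫⁻ x, m x ∂μ) ^ 2
      ≤ (μ univ ^ (1 / 2 : ℝ) * (∫⁻ x, m x ^ (2 : ℝ) ∂μ) ^ (1 / 2 : ℝ)) ^ 2 := by gcongr
    _ = μ univ * ∫⁻ x, m x ^ 2 ∂μ := by
        simp only [mul_pow, ← ENNReal.rpow_two, ← ENNReal.rpow_mul]
        norm_num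

variable [IsFiniteMeasure μ]

lemma measure_setOf_mem_Ico_comm (hf : Measurable f) (hk : Measurable k)
    (hfk : IdentDistrib f k μ μ) (t : ℝ) :
    μ {x | t ∈ Ico (f x) (k x)} = μ {x | t ∈ Ico (k x) (f x)} := by
  have setOf_eq (f k : α → ℝ) : {x | t ∈ Ico (f x) (k x)} = k ⁻¹' Ioi t \ f ⁻¹' Ioi t := by
    ext x; simp [and_comm]
  rw [setOf_eq, setOf_eq]
  exact measure_sdiff_symm (hk measurableSet_Ioi).nullMeasurableSet
    (hf measurableSet_Ioi).nullMeasurableSet (hfk.measure_mem_eq measurableSet_Ioi).symm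
    (measure_ne_top _ _)

lemma lintegral_edist_eq_two_mul (hf : Measurable f) (hk : Measurable k)
    (hfk : IdentDistrib f k μ μ) :
    ∫⁻ x, edist (f x) (k x) ∂μ = 2 * ∫⁻ t, μ {x | t ∈ Ico (f x) (k x)} := by
  have measurable_volume_Ico : Measurable fun x ↦ volume (Ico (f x) (k x)) := by
    simp only [Real.volume_Ico]; fun_prop
  simp only [edist_eq_volume_Ico_add_volume_Ico]
  rw [lintegral_add_left measurable_volume_Ico, lintegral_measure_Ico hf hk,
    lintegral_measure_Ico hk hf, two_mul]
  simp only [measure_setOf_mem_Ico_comm hf hk hfk]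

lemma lintegral_crossing_eq_lintegral_sq (hf : Measurable f) (hk : Measurable k)
    (hfk : IdentDistrib f k μ μ) :
    ∫⁻ x, ∫⁻ y, crossing f k x y ∂μ ∂μ = ∫⁻ t, μ {x | t ∈ Ico (f x) (k x)} ^ 2 := by
  simp only [lintegral_crossing hf hk, measure_setOf_mem_Ico_comm hf hk hfk, sq]

lemma ae_eq_of_crossing_eq_zero (hf : Measurable f) (hk : Measurable k)
    (hfk : IdentDistrib f k μ μ) (h : ∀ᵐ x ∂μ, ∀ᵐ y ∂μ, crossing f k x y = 0) : f =ᵐ[μ] k := by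
  have lintegral_sq_eq_zero : ∫⁻ t, μ {x | t ∈ Ico (f x) (k x)} ^ 2 = 0 := by
    rw [← lintegral_crossing_eq_lintegral_sq hf hk hfk, ← lintegral_zero]
    refine lintegral_congr_ae (h.mono fun x hx ↦ ?_)
    exact (lintegral_congr_ae hx).trans lintegral_zero
  have lintegral_edist_eq_zero : ∫⁻ x, edist (f x) (k x) ∂μ = 0 := by
    rw [lintegral_edist_eq_two_mul hf hk hfk, mul_eq_zero, lintegral_eq_zero_iff
      (measurable_measure_setOf_mem_Ico hf hk)]
    rw [lintegral_eq_zero_iff ((measurable_measure_setOf_mem_Ico hf hk).pow_const 2)]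
      at lintegral_sq_eq_zero
    exact .inr (lintegral_sq_eq_zero.mono fun t ht ↦ pow_eq_zero_iff two_ne_zero |>.mp ht)
  rw [lintegral_eq_zero_iff (hf.edist hk)] at lintegral_edist_eq_zero
  exact lintegral_edist_eq_zero.mono fun x hx ↦ edist_eq_zero.mp hx

lemma sq_lintegral_edist_le (hf : Measurable f) (hk : Measurable k)
    (hfk : IdentDistrib f k μ μ) {a b : ℝ} (hf_ge : ∀ x, a ≤ f x) (hk_lt : ∀ x, k x < b) :
    (∫⁻ x, edist (f x) (k x) ∂μ) ^ 2 ≤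
      4 * ENNReal.ofReal (b - a) * ∫⁻ x, ∫⁻ y, crossing f k x y ∂μ ∂μ := by
  have setLIntegral_eq : ∫⁻ t in Ico a b, μ {x | t ∈ Ico (f x) (k x)} =
      ∫⁻ t, μ {x | t ∈ Ico (f x) (k x)} := by
    refine setLIntegral_eq_of_support_subset fun t ht ↦ ?_
    obtain ⟨x, hx⟩ := nonempty_of_measure_ne_zero ht
    exact ⟨(hf_ge x).trans hx.1, hx.2.trans (hk_lt x)⟩
  have cauchy_schwarz := sq_lintegral_le_measure_univ_mul
    (measurable_measure_setOf_mem_Ico (μ := μ) hf hk).aemeasurable (μ := volume.restrict (Ico a b))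
  rw [setLIntegral_eq, Measure.restrict_apply_univ, Real.volume_Ico] at cauchy_schwarz
  rw [lintegral_edist_eq_two_mul hf hk hfk, lintegral_crossing_eq_lintegral_sq hf hk hfk, mul_pow,
    mul_assoc]
  gcongr
  · norm_num
  · exact cauchy_schwarz.trans (by gcongr; exact Measure.restrict_le_self)

end Equimeasurable

/-- The distribution function of `f`. -/
noncomputable def distribution (f : Circ → ℝ) (t : ℝ) : ℝ := volume.real {x | t < f x}

/-- The symmetric decreasing rearrangement of a nonnegative function on the circle: the level set
`{t < rearr f}` is the open arc centred at `0` of length `distribution f t`. -/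
noncomputable def rearr (f : Circ → ℝ) (x : Circ) : ℝ :=
  volume.real {t | 0 < t ∧ 2 * ‖x‖ < distribution f t}

/-- A function that decreases with the distance to `0`. The value at `0` itself is unconstrained,
because `rearr f 0` is a junk value when `f` is unbounded. -/
def RadiallyAntitone (k : Circ → ℝ) : Prop := ∀ ⦃x y⦄, x ≠ 0 → ‖x‖ ≤ ‖y‖ → k y ≤ k x

section Rearrangement

variable {f k : Circ → ℝ} {x : Circ} {r t : ℝ}

lemma distribution_antitone (f : Circ → ℝ) : Antitone (distribution f) :=
  fun _ _ hst ↦ measureReal_mono fun _ ↦ hst.trans_lt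

lemma distribution_le_two_pi (f : Circ → ℝ) (t : ℝ) : distribution f t ≤ 2 * π := by
  refine (measureReal_mono (subset_univ _)).trans_eq ?_
  rw [measureReal_def, AddCircle.measure_univ, ENNReal.toReal_ofReal two_pi_pos.le]

lemma exists_distribution_lt (hf : Measurable f) (hr : 0 < r) : ∃ t, distribution f t < r := by
  have antitone : Antitone fun n : ℕ ↦ {x | (n : ℝ) < f x} :=
    fun m n hmn x (hx : n < f x) ↦ show m < f x from (Nat.cast_le.mpr hmn).trans_lt hx
  have iInter_eq : ⋂ n : ℕ, {x | (n : ℝ) < f x} = ∅ :=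
    eq_empty_of_forall_notMem fun x hx ↦
      let ⟨n, hn⟩ := exists_nat_gt (f x)
      (mem_iInter.mp hx n).not_gt hn
  have iInf_eq := antitone.measure_iInter (μ := volume)
    (fun n ↦ (measurableSet_lt measurable_const hf).nullMeasurableSet) ⟨0, measure_ne_top _ _⟩
  rw [iInter_eq, measure_empty] at iInf_eq
  obtain ⟨n, hn⟩ := iInf_lt_iff.mp (iInf_eq.symm.trans_lt (ENNReal.ofReal_pos.mpr hr))
  exact ⟨n, (ENNReal.lt_ofReal_iff_toReal_lt (measure_ne_top _ _)).mp hn⟩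

lemma exists_gt_lt_distribution (h : r < distribution f t) : ∃ s > t, r < distribution f s := by
  obtain ⟨s, s_anti, s_gt, s_tendsto⟩ := exists_seq_strictAnti_tendsto t
  have monotone : Monotone fun n ↦ {x | s n < f x} :=
    fun m n hmn x (hx : _ < _) ↦ (s_anti.antitone hmn).trans_lt hx
  have iUnion_eq : ⋃ n, {x | s n < f x} = {x | t < f x} := by
    ext x
    refine mem_iUnion.trans ⟨fun ⟨n, hn⟩ ↦ (s_gt n).trans hn, fun hx ↦ ?_⟩
    exact (s_tendsto.eventually_lt_const hx).exists
  have iSup_eq := monotone.measure_iUnion (μ := volume)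
  rw [iUnion_eq, ← ofReal_measureReal] at iSup_eq
  rcases lt_or_ge r 0 with hr | hr
  · exact ⟨t + 1, lt_add_one t, hr.trans_le measureReal_nonneg⟩
  · obtain ⟨n, hn⟩ := lt_iSup_iff.mp
      (((ENNReal.ofReal_lt_ofReal_iff_of_nonneg hr).mpr h).trans_eq iSup_eq)
    exact ⟨s n, s_gt n, (ENNReal.ofReal_lt_iff_lt_toReal hr (measure_ne_top _ _)).mp hn⟩

lemma rearr_nonneg (f : Circ → ℝ) (x : Circ) : 0 ≤ rearr f x := measureReal_nonneg

lemma lt_rearr_iff (hf : Measurable f) (hx : x ≠ 0) (ht : 0 ≤ t) :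
    t < rearr f x ↔ 2 * ‖x‖ < distribution f t := by
  have levels_subset {s : ℝ} (hs : distribution f s ≤ 2 * ‖x‖) :
      {r | 0 < r ∧ 2 * ‖x‖ < distribution f r} ⊆ Ioc 0 s :=
    fun r hr ↦ ⟨hr.1, (distribution_antitone f).reflect_lt (hs.trans_lt hr.2) |>.le⟩
  constructor
  · refine fun h ↦ lt_of_not_ge fun hle ↦ h.not_ge ?_
    refine (measureReal_mono (levels_subset hle) measure_Ioc_lt_top.ne).trans_eq ?_
    rw [Real.volume_real_Ioc_of_le ht, sub_zero]
  · intro h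
    obtain ⟨M, hM⟩ := exists_distribution_lt hf (r := 2 * ‖x‖) (by positivity)
    obtain ⟨s, hts, hs⟩ := exists_gt_lt_distribution h
    have subset_levels : Ioc 0 s ⊆ {r | 0 < r ∧ 2 * ‖x‖ < distribution f r} :=
      fun r hr ↦ ⟨hr.1, hs.trans_le (distribution_antitone f hr.2)⟩
    calc t < s := hts
      _ = volume.real (Ioc 0 s) := by
        rw [Real.volume_real_Ioc_of_le (ht.trans hts.le), sub_zero]
      _ ≤ rearr f x :=
        measureReal_mono subset_levels
          (measure_ne_top_of_subset (levels_subset hM.le) measure_Ioc_lt_top.ne)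

lemma measurable_rearr (hf : Measurable f) : Measurable (rearr f) := by
  refine measurable_of_Ioi fun t ↦ ?_
  rcases lt_or_ge t 0 with ht | ht
  · convert MeasurableSet.univ
    exact eq_univ_of_forall fun x ↦ ht.trans_le (rearr_nonneg f x)
  · have ae_eq_arc : rearr f ⁻¹' Ioi t \ {0} = {x | 2 * ‖x‖ < distribution f t} \ {0} := by
      ext x
      exact and_congr_left fun hx ↦ lt_rearr_iff hf hx ht
    rw [← sdiff_union_inter (rearr f ⁻¹' Ioi t) {0}, ae_eq_arc]
    refine .union (.diff (measurableSet_lt (by fun_prop) measurable_const) (.singleton 0)) ?_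
    exact ((finite_singleton 0).subset inter_subset_right).measurableSet

lemma rearr_radiallyAntitone (hf : Measurable f) : RadiallyAntitone (rearr f) := by
  intro x y hx hxy
  have hy : y ≠ 0 := norm_pos_iff.mp ((norm_pos_iff.mpr hx).trans_le hxy)
  by_contra! h
  have := (lt_rearr_iff hf hy (rearr_nonneg f x)).mp h
  exact lt_irrefl _ ((lt_rearr_iff hf hx (rearr_nonneg f x)).mpr (by linarith))

lemma volume_setOf_two_mul_norm_lt_distribution (f : Circ → ℝ) (t : ℝ) :
    volume {x : Circ | 2 * ‖x‖ < distribution f t} = volume {x | t < f x} := by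
  have setOf_eq : {x : Circ | 2 * ‖x‖ < distribution f t} = {x | ‖x‖ < distribution f t / 2} := by
    ext x; exact (lt_div_iff₀' (zero_lt_two' ℝ)).symm
  rw [setOf_eq, volume_setOf_norm_lt, mul_div_cancel₀ _ two_ne_zero,
    min_eq_right (distribution_le_two_pi f t), distribution, ofReal_measureReal]

lemma volume_setOf_lt_rearr (hf : Measurable f) (hf_nonneg : ∀ x, 0 ≤ f x) (t : ℝ) :
    volume {x | t < rearr f x} = volume {x | t < f x} := by
  rcases lt_or_ge t 0 with ht | ht
  · simp only [ht.trans_le (rearr_nonneg f _), ht.trans_le (hf_nonneg _)]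
  · rw [← volume_setOf_two_mul_norm_lt_distribution f]
    exact measure_congr ((ae_ne 0).mono fun x hx ↦ propext (lt_rearr_iff hf hx ht))

lemma identDistrib_of_volume_setOf_lt_eq (hf : Measurable f) (hk : Measurable k)
    (h : ∀ t, volume {x | t < f x} = volume {x | t < k x}) :
    IdentDistrib f k volume volume where
  aemeasurable_fst := hf.aemeasurable
  aemeasurable_snd := hk.aemeasurable
  map_eq := by
    refine Measure.ext_of_Iic _ _ fun t ↦ ?_
    rw [Measure.map_apply hf measurableSet_Iic, Measure.map_apply hk measurableSet_Iic,
      ← compl_Ioi, preimage_compl, preimage_compl,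
      measure_compl (hf measurableSet_Ioi) (measure_ne_top _ _),
      measure_compl (hk measurableSet_Ioi) (measure_ne_top _ _)]
    exact congrArg (volume univ - ·) (h t)

lemma identDistrib_rearr (hf : Measurable f) (hf_nonneg : ∀ x, 0 ≤ f x) :
    IdentDistrib (rearr f) f volume volume :=
  identDistrib_of_volume_setOf_lt_eq (measurable_rearr hf) hf (volume_setOf_lt_rearr hf hf_nonneg)

lemma rearr_congr (h : IdentDistrib f k volume volume) : rearr f = rearr k := by
  have distribution_eq : distribution f = distribution k :=
    funext fun t ↦ congrArg ENNReal.toReal (h.measure_mem_eq measurableSet_Ioi)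
  unfold rearr
  rw [distribution_eq]

lemma ae_eq_of_radiallyAntitone (hf : Measurable f) (hk : Measurable k)
    (hfk : IdentDistrib f k volume volume) (hk_anti : RadiallyAntitone k)
    (h : ∀ᵐ x, ∀ᵐ y, 0 ≤ (f x - f y) * (circCos x - circCos y)) : f =ᵐ[volume] k := by
  refine ae_eq_of_crossing_eq_zero hf hk hfk (h.mono fun x hx ↦ ?_)
  filter_upwards [hx, ae_ne 0] with y hxy hy
  suffices Ico (f x) (f y) ∩ Ico (k y) (k x) = ∅ by rw [crossing, this, measure_empty]
  refine eq_empty_of_forall_notMem fun t ⟨hf_t, hk_t⟩ ↦ ?_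
  have norm_lt : ‖x‖ < ‖y‖ := by
    by_contra! hle
    exact (hk_t.1.trans_lt hk_t.2).not_ge (hk_anti hy hle)
  exact hxy.not_gt (mul_neg_of_neg_of_pos (sub_neg.mpr (hf_t.1.trans_lt hf_t.2))
    (sub_pos.mpr (circCos_lt_circCos_iff.mpr norm_lt)))

end Rearrangement

/-- The polarization (two-point rearrangement) of `f` with respect to the reflection `reflect c`:
the larger of the values of `f` at `x` and `reflect c x` is moved to the half circle
`{x | 0 < circSin (x - c)}`. -/
noncomputable def polarize (c : Circ) (f : Circ → ℝ) (x : Circ) : ℝ :=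
  if 0 < circSin (x - c) then max (f x) (f (reflect c x)) else min (f x) (f (reflect c x))

section Polarization

variable {c x : Circ} {f k : Circ → ℝ}

lemma polarize_of_pos (f : Circ → ℝ) (h : 0 < circSin (x - c)) :
    polarize c f x = max (f x) (f (reflect c x)) := if_pos h

lemma polarize_reflect_of_pos (f : Circ → ℝ) (h : 0 < circSin (x - c)) :
    polarize c f (reflect c x) = min (f x) (f (reflect c x)) := by
  have not_pos : ¬0 < circSin (reflect c x - c) := by rw [circSin_reflect_sub]; linarith
  rw [polarize, if_neg not_pos, reflect_reflect, min_comm]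

lemma polarize_of_eq_zero (f : Circ → ℝ) (h : circSin (x - c) = 0) : polarize c f x = f x := by
  simp [polarize, reflect_eq_self h]

-- The pair `{x, reflect c x}` has a member in the half circle unless it is a fixed point.
lemma forall_of_forall_circSin_pos {P : Circ → Prop} (hP : ∀ x, P (reflect c x) → P x)
    (h_zero : ∀ x, circSin (x - c) = 0 → P x) (h_pos : ∀ x, 0 < circSin (x - c) → P x) (x : Circ) :
    P x := by
  rcases lt_trichotomy (circSin (x - c)) 0 with h | h | h
  · exact hP x (h_pos _ (by rwa [circSin_reflect_sub, neg_pos]))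
  · exact h_zero x h
  · exact h_pos x h

lemma polarize_add_polarize_reflect {M : Type*} [AddCommMonoid M] (c : Circ) (f : Circ → ℝ)
    (ψ : ℝ → M) (x : Circ) :
    ψ (polarize c f x) + ψ (polarize c f (reflect c x)) = ψ (f x) + ψ (f (reflect c x)) := by
  induction x using forall_of_forall_circSin_pos (c := c) with
  | hP x h => simpa [add_comm] using h
  | h_zero x h => rw [reflect_eq_self h, polarize_of_eq_zero f h]
  | h_pos x h =>
    rw [polarize_of_pos f h, polarize_reflect_of_pos f h]
    rcases le_total (f x) (f (reflect c x)) with h | h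
    · rw [min_eq_left h, max_eq_right h, add_comm]
    · rw [min_eq_right h, max_eq_left h]

lemma measurable_polarize (c : Circ) (hf : Measurable f) : Measurable (polarize c f) :=
  Measurable.ite (measurableSet_lt measurable_const (by have := measurable_circSin; fun_prop))
    (hf.max (hf.comp (measurable_reflect c))) (hf.min (hf.comp (measurable_reflect c)))

lemma polarize_comp {φ : ℝ → ℝ} (hφ : Monotone φ) (c : Circ) (f : Circ → ℝ) :
    polarize c (φ ∘ f) = φ ∘ polarize c f := by
  ext x
  simp only [polarize, Function.comp_apply, apply_ite φ, hφ.map_max, hφ.map_min]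

lemma lintegral_add_reflect (c : Circ) {F : Circ → ℝ≥0∞} (hF : Measurable F) :
    ∫⁻ x, F x + F (reflect c x) = 2 * ∫⁻ x, F x := by
  rw [lintegral_add_left hF, (measurePreserving_reflect c).lintegral_comp hF]
  exact (two_mul _).symm

lemma lintegral_le_of_add_reflect_le (c : Circ) {F G : Circ → ℝ≥0∞} (hF : Measurable F)
    (hG : Measurable G) (h : ∀ᵐ x, F x + F (reflect c x) ≤ G x + G (reflect c x)) :
    ∫⁻ x, F x ≤ ∫⁻ x, G x := by
  rw [← ENNReal.mul_le_mul_iff_right two_ne_zero ENNReal.ofNat_ne_top, ← lintegral_add_reflect c hF,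
    ← lintegral_add_reflect c hG]
  exact lintegral_mono_ae h

lemma identDistrib_polarize (c : Circ) (hf : Measurable f) :
    IdentDistrib (polarize c f) f volume volume := by
  refine identDistrib_of_volume_setOf_lt_eq (measurable_polarize c hf) hf fun t ↦ ?_
  let above (s : ℝ) : ℝ≥0∞ := (Ioi t).indicator 1 s
  have measurable_above : Measurable above := measurable_one.indicator measurableSet_Ioi
  have volume_eq {k : Circ → ℝ} (hk : Measurable k) :
      volume {x | t < k x} = ∫⁻ x, above (k x) :=
    (lintegral_indicator_one (hk measurableSet_Ioi)).symm
  rw [volume_eq hf, volume_eq (measurable_polarize c hf)]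
  exact le_antisymm
    (lintegral_le_of_add_reflect_le c (measurable_above.comp (measurable_polarize c hf))
      (measurable_above.comp hf)
      (.of_forall fun x ↦ (polarize_add_polarize_reflect c f above x).le))
    (lintegral_le_of_add_reflect_le c (measurable_above.comp hf)
      (measurable_above.comp (measurable_polarize c hf))
      (.of_forall fun x ↦ (polarize_add_polarize_reflect c f above x).ge))

end Polarization

section PolarizationGain

variable {c : Circ} {f k : Circ → ℝ}

lemma measurable_crossing {α β : Type*} [MeasurableSpace α] [MeasurableSpace β] {f k : α → ℝ}
    (hf : Measurable f) (hk : Measurable k) {a b : β → α} (ha : Measurable a) (hb : Measurable b) :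
    Measurable fun p ↦ crossing f k (a p) (b p) := by
  simp only [crossing, Ico_inter_Ico, Real.volume_Ico]
  fun_prop

lemma abs_max_sub_add_abs_min_sub_add_le (a b : ℝ) {p q : ℝ} (hqp : q ≤ p) :
    |max a b - p| + |min a b - q| + 2 * max 0 (min b p - max a q) ≤ |a - p| + |b - q| := by
  rcases le_total a b with hab | hba
  · rw [max_eq_right hab, min_eq_left hab]
    rcases max_cases 0 (min b p - max a q) with ⟨h, -⟩ | ⟨h, -⟩ <;> rw [h] <;>
      rcases min_cases b p with ⟨h, -⟩ | ⟨h, -⟩ <;> rcases max_cases a q with ⟨h', -⟩ | ⟨h', -⟩ <;>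
      grind
  · rw [max_eq_left hba, min_eq_right hba, max_eq_left, mul_zero, add_zero]
    exact sub_nonpos.mpr ((min_le_left b p).trans (hba.trans (le_max_left a q)))

lemma edist_max_add_edist_min_add_le (a b : ℝ) {p q : ℝ} (hqp : q ≤ p) :
    edist (max a b) p + edist (min a b) q + 2 * volume (Ico a b ∩ Ico q p) ≤
      edist a p + edist b q := by
  have volume_eq : volume (Ico a b ∩ Ico q p) = ENNReal.ofReal (max 0 (min b p - max a q)) := by
    rw [Ico_inter_Ico, Real.volume_Ico, ENNReal.ofReal_max, ENNReal.ofReal_zero,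
      max_eq_right zero_le]
  simp only [volume_eq, edist_dist, Real.dist_eq]
  rw [← ENNReal.ofReal_ofNat, ← ENNReal.ofReal_mul zero_le_two, ← ENNReal.ofReal_add (by positivity)
    (by positivity), ← ENNReal.ofReal_add (by positivity) (by positivity), ← ENNReal.ofReal_add
    (by positivity) (by positivity)]
  exact ENNReal.ofReal_le_ofReal (abs_max_sub_add_abs_min_sub_add_le a b hqp)

lemma lintegral_edist_polarize_add_le (hf : Measurable f) (hk : Measurable k)
    (hck : ∀ᵐ x, 0 < circSin (x - c) → k (reflect c x) ≤ k x) :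
    (∫⁻ x, edist (polarize c f x) (k x)) + 2 * ∫⁻ x, crossing f k x (reflect c x) ≤
      ∫⁻ x, edist (f x) (k x) := by
  have measurable_edist_polarize : Measurable fun x ↦ edist (polarize c f x) (k x) :=
    (measurable_polarize c hf).edist hk
  have measurable_gain : Measurable fun x ↦ 2 * crossing f k x (reflect c x) :=
    (measurable_crossing hf hk measurable_id (measurable_reflect c)).const_mul 2
  rw [← lintegral_const_mul' _ _ ENNReal.ofNat_ne_top,
    ← lintegral_add_left measurable_edist_polarize]
  refine lintegral_le_of_add_reflect_le c (measurable_edist_polarize.add measurable_gain)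
    (hf.edist hk) ?_
  filter_upwards [hck, (measurePreserving_reflect c).quasiMeasurePreserving.ae hck]
    with x hx hx_reflect
  induction x using forall_of_forall_circSin_pos (c := c) with
  | hP x ih =>
    simpa only [reflect_reflect, add_comm] using ih hx_reflect ((reflect_reflect c x).symm ▸ hx)
  | h_zero x h => simp [reflect_eq_self h, polarize_of_eq_zero f h, crossing]
  | h_pos x h =>
    have crossing_reflect : crossing f k (reflect c x) x = 0 := by
      rw [crossing, Ico_eq_empty (hx h).not_gt, inter_empty, measure_empty]
    rw [polarize_of_pos f h, polarize_reflect_of_pos f h, reflect_reflect, crossing_reflect,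
      mul_zero, add_zero, add_right_comm]
    exact edist_max_add_edist_min_add_le _ _ (hx h)

lemma exists_circSin_nonpos_add_self_eq (b : Circ) : ∃ c, circSin c ≤ 0 ∧ c + c = b := by
  obtain ⟨c, rfl⟩ := exists_add_self_eq b
  rcases le_total (circSin c) 0 with h | h
  · exact ⟨c, h, rfl⟩
  · refine ⟨c + (π : ℝ), ?_, ?_⟩
    · rw [circSin_add, circCos_coe, circSin_coe, Real.cos_pi, Real.sin_pi]
      linarith
    · rw [add_add_add_comm, coe_pi_add_coe_pi, add_zero]

-- The average over all reflections of the gain is the mean of `crossing` over all pairs.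
lemma exists_circSin_nonpos_le_lintegral_crossing {ι : Type*} [Fintype ι] {f k : ι → Circ → ℝ}
    (hf : ∀ i, Measurable (f i)) (hk : ∀ i, Measurable (k i))
    (h_fin : ∑ i, ∫⁻ x, ∫⁻ y, crossing (f i) (k i) x y ≠ ⊤) :
    ∃ c, circSin c ≤ 0 ∧ ∑ i, ∫⁻ x, ∫⁻ y, crossing (f i) (k i) x y ≤
      (∑ i, ∫⁻ x, crossing (f i) (k i) x (reflect c x)) * ENNReal.ofReal (2 * π) := by
  let gain (b : Circ) : ℝ≥0∞ := ∑ i, ∫⁻ x, crossing (f i) (k i) x (b - x)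
  have measurable_crossing_sub (i) : Measurable fun p : Circ × Circ ↦
      crossing (f i) (k i) p.2 (p.1 - p.2) :=
    measurable_crossing (hf i) (hk i) measurable_snd (measurable_fst.sub measurable_snd)
  have lintegral_gain : ∫⁻ b, gain b = ∑ i, ∫⁻ x, ∫⁻ y, crossing (f i) (k i) x y := by
    rw [lintegral_finsetSum _ fun i _ ↦ (measurable_crossing_sub i).lintegral_prod_right]
    refine Finset.sum_congr rfl fun i _ ↦ ?_
    rw [lintegral_lintegral_swap (measurable_crossing_sub i).aemeasurable]
    exact lintegral_congr fun x ↦ lintegral_sub_right_eq_self (crossing (f i) (k i) x) x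
  obtain ⟨b, hb⟩ := exists_laverage_le (NeZero.ne volume) (lintegral_gain.trans_ne h_fin)
  obtain ⟨c, hc, rfl⟩ := exists_circSin_nonpos_add_self_eq b
  refine ⟨c, hc, ?_⟩
  rw [laverage_eq, lintegral_gain, AddCircle.measure_univ] at hb
  exact (ENNReal.div_le_iff (by simpa using pi_pos) ENNReal.ofReal_ne_top).mp hb

lemma RadiallyAntitone.ae_reflect_le (hk : RadiallyAntitone k) (hc : circSin c ≤ 0) :
    ∀ᵐ x, 0 < circSin (x - c) → k (reflect c x) ≤ k x := by
  filter_upwards [ae_ne 0] with x hx h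
  refine hk hx (circCos_le_circCos_iff.mp ?_)
  have := circCos_sub_sub_circCos_sub_reflect c 0 x
  simp only [zero_sub, circCos_neg, circSin_neg] at this
  nlinarith

/-- The `L¹` distance between two finite families of functions. -/
noncomputable def distL1 {ι : Type*} [Fintype ι] (f k : ι → Circ → ℝ) : ℝ≥0∞ :=
  ∑ i, ∫⁻ x, edist (f i x) (k i x)

lemma lintegral_crossing_ne_top {a b : ℝ} (hf : ∀ x, a ≤ f x) (hk : ∀ x, k x < b) :
    ∫⁻ x, ∫⁻ y, crossing f k x y ≠ ⊤ := by
  have crossing_le (x y : Circ) : crossing f k x y ≤ ENNReal.ofReal (b - a) :=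
    Real.volume_Ico ▸ measure_mono fun t ht ↦ ⟨(hf x).trans ht.1.1, ht.2.2.trans (hk x)⟩
  refine ne_top_of_le_ne_top ?_ (lintegral_mono fun x ↦ lintegral_mono (crossing_le x))
  simp [AddCircle.measure_univ, ENNReal.mul_eq_top]

lemma exists_distL1_polarize_add_le {ι : Type*} [Fintype ι] {f k : ι → Circ → ℝ}
    (hf : ∀ i, Measurable (f i)) (hk : ∀ i, Measurable (k i))
    (hfk : ∀ i, IdentDistrib (f i) (k i) volume volume) (hk_anti : ∀ i, RadiallyAntitone (k i))
    {a b : ℝ} (hf_ge : ∀ i x, a ≤ f i x) (hk_lt : ∀ i x, k i x < b) :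
    ∃ c, distL1 (fun i ↦ polarize c (f i)) k + distL1 f k ^ 2 /
      (Fintype.card ι * (4 * ENNReal.ofReal (b - a)) * ENNReal.ofReal (2 * π)) ≤ distL1 f k := by
  obtain ⟨c, hc, gain_ge⟩ := exists_circSin_nonpos_le_lintegral_crossing hf hk
    (ENNReal.sum_ne_top.mpr fun i _ ↦ lintegral_crossing_ne_top (hf_ge i) (hk_lt i))
  have gain_le : distL1 (fun i ↦ polarize c (f i)) k +
      2 * ∑ i, ∫⁻ x, crossing (f i) (k i) x (reflect c x) ≤ distL1 f k := by
    rw [distL1, Finset.mul_sum, ← Finset.sum_add_distrib]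
    exact Finset.sum_le_sum fun i _ ↦
      lintegral_edist_polarize_add_le (hf i) (hk i) ((hk_anti i).ae_reflect_le hc)
  refine ⟨c, le_trans ?_ gain_le⟩
  gcongr
  refine ENNReal.div_le_of_le_mul ?_
  calc distL1 f k ^ 2
      ≤ Fintype.card ι * ∑ i, (∫⁻ x, edist (f i x) (k i x)) ^ 2 := by
        have := ENNReal.rpow_sum_le_const_mul_sum_rpow Finset.univ
          (fun i ↦ ∫⁻ x, edist (f i x) (k i x)) one_le_two
        norm_num at this
        exact this
    _ ≤ Fintype.card ι * ∑ i, 4 * ENNReal.ofReal (b - a) *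
          ∫⁻ x, ∫⁻ y, crossing (f i) (k i) x y := by
        gcongr with i
        exact sq_lintegral_edist_le (hf i) (hk i) (hfk i) (hf_ge i) (hk_lt i)
    _ ≤ Fintype.card ι * (4 * ENNReal.ofReal (b - a) *
          ((∑ i, ∫⁻ x, crossing (f i) (k i) x (reflect c x)) * ENNReal.ofReal (2 * π))) := by
        rw [← Finset.mul_sum]
        gcongr
    _ = 1 * (∑ i, ∫⁻ x, crossing (f i) (k i) x (reflect c x)) *
          (Fintype.card ι * (4 * ENNReal.ofReal (b - a)) * ENNReal.ofReal (2 * π)) := by ring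
    _ ≤ 2 * (∑ i, ∫⁻ x, crossing (f i) (k i) x (reflect c x)) *
          (Fintype.card ι * (4 * ENNReal.ofReal (b - a)) * ENNReal.ofReal (2 * π)) := by
        gcongr
        exact one_le_two

end PolarizationGain

/-- Successive polarizations of `f` with respect to a list of reflections. -/
noncomputable def polarizeList (l : List Circ) (f : Circ → ℝ) : Circ → ℝ := l.foldr polarize f

section PolarizeList

variable {f : Circ → ℝ}

lemma measurable_polarizeList (hf : Measurable f) (l : List Circ) :
    Measurable (polarizeList l f) := by
  induction l with
  | nil => exact hf
  | cons c l ih => exact measurable_polarize c ih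

lemma identDistrib_polarizeList (hf : Measurable f) (l : List Circ) :
    IdentDistrib (polarizeList l f) f volume volume := by
  induction l with
  | nil => exact .refl hf.aemeasurable
  | cons c l ih => exact (identDistrib_polarize c (measurable_polarizeList hf l)).trans ih

lemma polarizeList_comp {φ : ℝ → ℝ} (hφ : Monotone φ) (l : List Circ) (f : Circ → ℝ) :
    polarizeList l (φ ∘ f) = φ ∘ polarizeList l f := by
  induction l with
  | nil => rfl
  | cons c l ih => exact (congrArg (polarize c) ih).trans (polarize_comp hφ c _)

lemma le_polarizeList {a : ℝ} (hf : ∀ x, a ≤ f x) (l : List Circ) (x : Circ) :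
    a ≤ polarizeList l f x := by
  induction l generalizing x with
  | nil => exact hf x
  | cons c l ih =>
    change a ≤ ite _ _ _
    split_ifs
    · exact le_max_of_le_left (ih x)
    · exact le_min (ih x) (ih _)

variable {ι : Type*} {f k : ι → Circ → ℝ}

lemma distL1_ne_top [Fintype ι] (hf : ∀ i, Measurable (f i)) (hk : ∀ i, Measurable (k i))
    (hfk : ∀ i, IdentDistrib (f i) (k i) volume volume)
    {a b : ℝ} (hf_ge : ∀ i x, a ≤ f i x) (hk_lt : ∀ i x, k i x < b) : distL1 f k ≠ ⊤ := by
  refine ENNReal.sum_ne_top.mpr fun i _ ↦ (ENNReal.pow_ne_top_iff.mp ?_).resolve_right two_ne_zero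
  exact ne_top_of_le_ne_top
    (ENNReal.mul_ne_top (by finiteness) (lintegral_crossing_ne_top (hf_ge i) (hk_lt i)))
    (sq_lintegral_edist_le (hf i) (hk i) (hfk i) (hf_ge i) (hk_lt i))

lemma iInf_distL1_polarizeList [Fintype ι] (hf : ∀ i, Measurable (f i))
    (hk : ∀ i, Measurable (k i)) (hfk : ∀ i, IdentDistrib (f i) (k i) volume volume)
    (hk_anti : ∀ i, RadiallyAntitone (k i))
    {a b : ℝ} (hf_ge : ∀ i x, a ≤ f i x) (hk_lt : ∀ i x, k i x < b) :
    ⨅ l, distL1 (fun i ↦ polarizeList l (f i)) k = 0 := by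
  set I := ⨅ l, distL1 (fun i ↦ polarizeList l (f i)) k
  set K := Fintype.card ι * (4 * ENNReal.ofReal (b - a)) * ENNReal.ofReal (2 * π)
  have I_le (l : List Circ) : I ≤ distL1 (fun i ↦ polarizeList l (f i)) k := iInf_le _ l
  have I_ne_top : I ≠ ⊤ := ne_top_of_le_ne_top (distL1_ne_top hf hk hfk hf_ge hk_lt) (I_le [])
  have gain (l : List Circ) : I + I ^ 2 / K ≤ distL1 (fun i ↦ polarizeList l (f i)) k := by
    obtain ⟨c, hc⟩ := exists_distL1_polarize_add_le
      (fun i ↦ measurable_polarizeList (hf i) l) hk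
      (fun i ↦ (identDistrib_polarizeList (hf i) l).trans (hfk i)) hk_anti
      (fun i ↦ le_polarizeList (hf_ge i) l) hk_lt
    exact le_trans (by gcongr; exacts [I_le (c :: l), I_le l]) hc
  have sq_div_eq_zero : I ^ 2 / K = 0 := by
    have : I + I ^ 2 / K ≤ I + 0 := (le_iInf gain).trans_eq (add_zero I).symm
    exact le_zero_iff.mp ((ENNReal.add_le_add_iff_left I_ne_top).mp this)
  have K_ne_top : K ≠ ⊤ := by finiteness
  simpa [K_ne_top] using sq_div_eq_zero

lemma tendsto_of_tsum_lintegral_edist_ne_top {α : Type*} [MeasurableSpace α] {μ : Measure α}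
    {f : ℕ → α → ℝ} {k : α → ℝ} (hf : ∀ n, Measurable (f n)) (hk : Measurable k)
    (h : ∑' n, ∫⁻ x, edist (f n x) (k x) ∂μ ≠ ⊤) :
    ∀ᵐ x ∂μ, Tendsto (fun n ↦ f n x) atTop (𝓝 (k x)) := by
  have measurable_edist (n : ℕ) : Measurable fun x ↦ edist (f n x) (k x) := (hf n).edist hk
  rw [← lintegral_tsum fun n ↦ (measurable_edist n).aemeasurable] at h
  filter_upwards [ae_lt_top (Measurable.tsum measurable_edist) h] with x hx
  exact tendsto_iff_edist_tendsto_0.mpr (ENNReal.tendsto_atTop_zero_of_tsum_ne_top hx.ne)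

lemma exists_polarizeList_tendsto_of_bounded [Finite ι] (hf : ∀ i, Measurable (f i))
    (hk : ∀ i, Measurable (k i)) (hfk : ∀ i, IdentDistrib (f i) (k i) volume volume)
    (hk_anti : ∀ i, RadiallyAntitone (k i)) {a b : ℝ} (hf_ge : ∀ i x, a ≤ f i x)
    (hk_lt : ∀ i x, k i x < b) :
    ∃ l : ℕ → List Circ, ∀ i, ∀ᵐ x, Tendsto (fun n ↦ polarizeList (l n) (f i) x) atTop
      (𝓝 (k i x)) := by
  have := Fintype.ofFinite ι
  obtain ⟨ε, ε_pos, tsum_ε⟩ := ENNReal.exists_pos_sum_of_countable one_ne_zero ℕ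
  have exists_lt (n : ℕ) : ∃ l, distL1 (fun i ↦ polarizeList l (f i)) k < ε n := by
    rw [← iInf_lt_iff, iInf_distL1_polarizeList hf hk hfk hk_anti hf_ge hk_lt]
    exact ENNReal.coe_pos.mpr (ε_pos n)
  choose l hl using exists_lt
  refine ⟨l, fun i ↦ tendsto_of_tsum_lintegral_edist_ne_top
    (fun n ↦ measurable_polarizeList (hf i) (l n)) (hk i)
    (ne_top_of_le_ne_top tsum_ε.ne_top (ENNReal.tsum_le_tsum fun n ↦ le_trans ?_ (hl n).le))⟩
  exact Finset.single_le_sum (f := fun i ↦ ∫⁻ x, edist (polarizeList (l n) (f i) x) (k i x))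
    (fun _ _ ↦ zero_le) (Finset.mem_univ i)

theorem exists_polarizeList_tendsto [Finite ι] (hf : ∀ i, Measurable (f i))
    (hk : ∀ i, Measurable (k i)) (hfk : ∀ i, IdentDistrib (f i) (k i) volume volume)
    (hk_anti : ∀ i, RadiallyAntitone (k i)) :
    ∃ l : ℕ → List Circ, ∀ i, ∀ᵐ x, Tendsto (fun n ↦ polarizeList (l n) (f i) x) atTop
      (𝓝 (k i x)) := by
  obtain ⟨l, hl⟩ := exists_polarizeList_tendsto_of_bounded (f := fun i ↦ arctan ∘ f i)
    (k := fun i ↦ arctan ∘ k i) (fun i ↦ measurable_arctan.comp (hf i))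
    (fun i ↦ measurable_arctan.comp (hk i)) (fun i ↦ (hfk i).comp measurable_arctan)
    (fun i x y hx hxy ↦ arctan_mono (hk_anti i hx hxy))
    (fun i x ↦ (neg_pi_div_two_lt_arctan _).le) (fun i x ↦ arctan_lt_pi_div_two _)
  refine ⟨l, fun i ↦ (hl i).mono fun x hx ↦ ?_⟩
  simp only [polarizeList_comp arctan_mono, Function.comp_apply] at hx
  simpa only [Function.comp_def, tan_arctan] using
    (continuousAt_tan.mpr (cos_arctan_pos (k i x)).ne').tendsto.comp hx

end PolarizeList

section FourPoint

variable {J : ℝ → ℝ} {a b p q A B : ℝ}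

-- `a - p` and `b - q` lie between `b - p` and `a - q`, with complementary weights.
lemma map_sub_add_map_sub_lt (hJ : StrictConvexOn ℝ univ J) (hba : b < a)
    (hqp : q < p) : J (a - p) + J (b - q) < J (a - q) + J (b - p) := by
  have pos : 0 < (a - b) + (p - q) := by linarith
  have ne : a - q ≠ b - p := by linarith
  obtain ⟨s, t, hs, ht, hst, hs_eq, ht_eq⟩ : ∃ s t : ℝ, 0 < s ∧ 0 < t ∧ s + t = 1 ∧
      s * (a - q) + t * (b - p) = a - p ∧ t * (a - q) + s * (b - p) = b - q := by
    refine ⟨(a - b) / ((a - b) + (p - q)), (p - q) / ((a - b) + (p - q)),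
      div_pos (by linarith) pos, div_pos (by linarith) pos, ?_, ?_, ?_⟩ <;> field_simp <;> ring
  have J_left := hJ.2 (mem_univ (a - q)) (mem_univ (b - p)) ne hs ht hst
  have J_right := hJ.2 (mem_univ (a - q)) (mem_univ (b - p)) ne ht hs (by linarith)
  simp only [smul_eq_mul, hs_eq, ht_eq] at J_left J_right
  obtain rfl : t = 1 - s := by linarith
  linarith

lemma map_max_sub_max_add_lt (hJ : StrictConvexOn ℝ univ J) (hBA : B < A)
    (h : (a - b) * (p - q) < 0) :
    (J (max a b - max p q) + J (min a b - min p q)) * A +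
        (J (max a b - min p q) + J (min a b - max p q)) * B <
      (J (a - p) + J (b - q)) * A + (J (a - q) + J (b - p)) * B := by
  rcases mul_neg_iff.mp h with ⟨hab, hpq⟩ | ⟨hab, hpq⟩
  · rw [sub_pos] at hab
    rw [sub_neg] at hpq
    rw [max_eq_left hab.le, min_eq_right hab.le, max_eq_right hpq.le, min_eq_left hpq.le]
    nlinarith [map_sub_add_map_sub_lt hJ hab hpq]
  · rw [sub_neg] at hab
    rw [sub_pos] at hpq
    rw [max_eq_right hab.le, min_eq_left hab.le, max_eq_left hpq.le, min_eq_right hpq.le]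
    nlinarith [map_sub_add_map_sub_lt hJ hab hpq]

lemma map_max_sub_max_add_le (hJ : StrictConvexOn ℝ univ J) (hBA : B < A) :
    (J (max a b - max p q) + J (min a b - min p q)) * A +
        (J (max a b - min p q) + J (min a b - max p q)) * B ≤
      (J (a - p) + J (b - q)) * A + (J (a - q) + J (b - p)) * B := by
  rcases lt_or_ge ((a - b) * (p - q)) 0 with h | h
  · exact (map_max_sub_max_add_lt hJ hBA h).le
  rcases mul_nonneg_iff.mp h with ⟨hab, hpq⟩ | ⟨hab, hpq⟩
  · rw [sub_nonneg] at hab hpq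
    rw [max_eq_left hab, min_eq_right hab, max_eq_left hpq, min_eq_right hpq]
  · rw [sub_nonpos] at hab hpq
    rw [max_eq_right hab, min_eq_left hab, max_eq_right hpq, min_eq_left hpq]
    linarith

end FourPoint

/-- The interaction density of the energy, with a kernel depending on the distance. -/
noncomputable def density (J g : ℝ → ℝ) (f h : Circ → ℝ) (p : Circ × Circ) : ℝ :=
  J (f p.1 - h p.2) * g ‖p.1 - p.2‖

/-- The interaction energy of `f` and `h`. -/
noncomputable def energy (J g : ℝ → ℝ) (f h : Circ → ℝ) : ℝ≥0∞ :=
  ∫⁻ p, ENNReal.ofReal (density J g f h p)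

/-- The sum of `F` over the orbit of `p` under reflecting either coordinate. -/
noncomputable def orbitSum (c : Circ) (F : Circ × Circ → ℝ) (p : Circ × Circ) : ℝ :=
  F p + F (reflect c p.1, reflect c p.2) + (F (p.1, reflect c p.2) + F (reflect c p.1, p.2))

/-- Compares the order of the values of `f` at `x` and at its mirror image with the order of the
coordinates `circSin (· - c)` of these points: this is nonnegative if and only if polarization
does not swap the two values (up to the fixed points of `reflect c`). -/
noncomputable def reflDiff (f : Circ → ℝ) (c x : Circ) : ℝ :=
  (f x - f (reflect c x)) * circSin (x - c)

section Energy

variable {J g : ℝ → ℝ} {c : Circ} {f h : Circ → ℝ}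

lemma reflDiff_reflect (f : Circ → ℝ) (c x : Circ) :
    reflDiff f c (reflect c x) = reflDiff f c x := by
  rw [reflDiff, reflDiff, reflect_reflect, circSin_reflect_sub]
  ring

lemma orbitSum_reflect_fst (c : Circ) (F : Circ × Circ → ℝ) (x y : Circ) :
    orbitSum c F (reflect c x, y) = orbitSum c F (x, y) := by
  simp only [orbitSum, reflect_reflect]
  ring

lemma orbitSum_reflect_snd (c : Circ) (F : Circ × Circ → ℝ) (x y : Circ) :
    orbitSum c F (x, reflect c y) = orbitSum c F (x, y) := by
  simp only [orbitSum, reflect_reflect]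
  ring

lemma orbitSum_nonneg {F : Circ × Circ → ℝ} (hF : ∀ p, 0 ≤ F p) (p : Circ × Circ) :
    0 ≤ orbitSum c F p :=
  add_nonneg (add_nonneg (hF _) (hF _)) (add_nonneg (hF _) (hF _))

lemma measurable_orbitSum (c : Circ) {F : Circ × Circ → ℝ} (hF : Measurable F) :
    Measurable (orbitSum c F) := by
  have := measurable_reflect c
  unfold orbitSum
  fun_prop

lemma lintegral_orbitSum (c : Circ) {F : Circ × Circ → ℝ} (hF : Measurable F) (hF0 : ∀ p, 0 ≤ F p) :
    ∫⁻ p, ENNReal.ofReal (orbitSum c F p) = 4 * ∫⁻ p, ENNReal.ofReal (F p) := by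
  have refl_refl := (measurePreserving_reflect c).prod (measurePreserving_reflect c)
  have id_refl := (MeasurePreserving.id (volume : Measure Circ)).prod (measurePreserving_reflect c)
  have refl_id := (measurePreserving_reflect c).prod (MeasurePreserving.id (volume : Measure Circ))
  have measurable_reflect := measurable_reflect c
  have h_comp {r : Circ × Circ → Circ × Circ} (hr : MeasurePreserving r volume volume) :
      ∫⁻ p, ENNReal.ofReal (F (r p)) = ∫⁻ p, ENNReal.ofReal (F p) :=
    hr.lintegral_comp hF.ennreal_ofReal
  have ofReal_orbitSum (p : Circ × Circ) : ENNReal.ofReal (orbitSum c F p) =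
      ENNReal.ofReal (F p) + ENNReal.ofReal (F (Prod.map (reflect c) (reflect c) p)) +
        (ENNReal.ofReal (F (Prod.map id (reflect c) p)) +
          ENNReal.ofReal (F (Prod.map (reflect c) id p))) := by
    rw [orbitSum, ENNReal.ofReal_add (add_nonneg (hF0 _) (hF0 _)) (add_nonneg (hF0 _) (hF0 _)),
      ENNReal.ofReal_add (hF0 _) (hF0 _), ENNReal.ofReal_add (hF0 _) (hF0 _)]
    rfl
  simp only [ofReal_orbitSum]
  rw [lintegral_add_left (by fun_prop), lintegral_add_left (by fun_prop),
    lintegral_add_left (by fun_prop), h_comp refl_refl, h_comp id_refl, h_comp refl_id]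
  ring

lemma norm_reflect_sub_reflect (c x y : Circ) : ‖reflect c x - reflect c y‖ = ‖x - y‖ := by
  rw [norm_sub_rev x, reflect, reflect, sub_sub_sub_cancel_left]

lemma norm_reflect_sub (c x y : Circ) : ‖reflect c x - y‖ = ‖x - reflect c y‖ := by
  rw [norm_sub_rev x, reflect, reflect, sub_right_comm]

lemma orbitSum_density (J g : ℝ → ℝ) (f h : Circ → ℝ) (c x y : Circ) :
    orbitSum c (density J g f h) (x, y) =
      (J (f x - h y) + J (f (reflect c x) - h (reflect c y))) * g ‖x - y‖ +
        (J (f x - h (reflect c y)) + J (f (reflect c x) - h y)) * g ‖x - reflect c y‖ := by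
  simp only [orbitSum, density, norm_reflect_sub, reflect_reflect]
  ring

lemma orbitSum_density_polarize_of_pos (hJ : StrictConvexOn ℝ univ J)
    (hg : StrictAntiOn g (Ioo 0 π)) (f h : Circ → ℝ) {x y : Circ} (hxy : ‖x - y‖ ∈ Ioo 0 π)
    (hxy' : ‖x - reflect c y‖ ∈ Ioo 0 π) (hx : 0 < circSin (x - c)) (hy : 0 < circSin (y - c)) :
    orbitSum c (density J g (polarize c f) (polarize c h)) (x, y) ≤
        orbitSum c (density J g f h) (x, y) ∧
      (reflDiff f c x * reflDiff h c y < 0 →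
        orbitSum c (density J g (polarize c f) (polarize c h)) (x, y) <
          orbitSum c (density J g f h) (x, y)) := by
  have g_lt : g ‖x - reflect c y‖ < g ‖x - y‖ := by
    refine hg hxy hxy' (circCos_lt_circCos_iff.mp ?_)
    linarith [circCos_sub_sub_circCos_sub_reflect c x y, mul_pos hx hy]
  simp only [orbitSum_density, polarize_of_pos _ hx, polarize_of_pos _ hy,
    polarize_reflect_of_pos _ hx, polarize_reflect_of_pos _ hy]
  refine ⟨map_max_sub_max_add_le hJ g_lt, fun h_neg ↦ map_max_sub_max_add_lt hJ g_lt ?_⟩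
  rw [reflDiff, reflDiff, mul_mul_mul_comm] at h_neg
  exact neg_of_mul_neg_left h_neg (mul_pos hx hy).le

lemma orbitSum_density_polarize (hJ : StrictConvexOn ℝ univ J)
    (hg : StrictAntiOn g (Ioo 0 π)) (f h : Circ → ℝ) {x y : Circ} (hxy : ‖x - y‖ ∈ Ioo 0 π)
    (hxy' : ‖x - reflect c y‖ ∈ Ioo 0 π) (hx : circSin (x - c) ≠ 0) (hy : circSin (y - c) ≠ 0) :
    orbitSum c (density J g (polarize c f) (polarize c h)) (x, y) ≤
        orbitSum c (density J g f h) (x, y) ∧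
      (reflDiff f c x * reflDiff h c y < 0 →
        orbitSum c (density J g (polarize c f) (polarize c h)) (x, y) <
          orbitSum c (density J g f h) (x, y)) := by
  induction x using forall_of_forall_circSin_pos (c := c) with
  | hP x ih =>
    simpa only [orbitSum_reflect_fst, reflDiff_reflect] using ih
      (by rwa [norm_reflect_sub]) (by rwa [norm_reflect_sub_reflect])
      (by rwa [circSin_reflect_sub, neg_ne_zero])
  | h_zero x h_zero => exact absurd h_zero hx
  | h_pos x x_pos =>
    induction y using forall_of_forall_circSin_pos (c := c) with
    | hP y ih =>
      simpa only [orbitSum_reflect_snd, reflDiff_reflect] using ih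
        (by rwa [circSin_reflect_sub, neg_ne_zero]) hxy' (by rwa [reflect_reflect])
    | h_zero y h_zero => exact absurd h_zero hy
    | h_pos y y_pos => exact orbitSum_density_polarize_of_pos hJ hg f h hxy hxy' x_pos y_pos

lemma ae_circSin_snd_sub_fst_ne_zero : ∀ᵐ p : Circ × Circ, circSin (p.2 - p.1) ≠ 0 := by
  have measurableSet_ne : MeasurableSet {p : Circ × Circ | circSin (p.2 - p.1) ≠ 0} :=
    (measurable_circSin.comp (measurable_snd.sub measurable_fst))
      (measurableSet_singleton (0 : ℝ)).compl
  rw [Measure.volume_eq_prod]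
  exact (Measure.ae_prod_iff_ae_ae measurableSet_ne).mpr (.of_forall ae_circSin_sub_ne_zero)

lemma ae_pair_norm_mem_Ioo (c : Circ) : ∀ᵐ p : Circ × Circ,
    ‖p.1 - p.2‖ ∈ Ioo 0 π ∧ ‖p.1 - reflect c p.2‖ ∈ Ioo 0 π := by
  have id_refl := (MeasurePreserving.id (volume : Measure Circ)).prod (measurePreserving_reflect c)
  filter_upwards [ae_circSin_snd_sub_fst_ne_zero,
    id_refl.quasiMeasurePreserving.ae ae_circSin_snd_sub_fst_ne_zero] with p hp hp'
  rw [norm_sub_rev, norm_sub_rev p.1]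
  exact ⟨norm_mem_Ioo_of_circSin_ne_zero hp, norm_mem_Ioo_of_circSin_ne_zero hp'⟩

lemma ae_orbitSum_density_polarize (hJ : StrictConvexOn ℝ univ J) (hg : StrictAntiOn g (Ioo 0 π))
    (c : Circ) (f h : Circ → ℝ) : ∀ᵐ p : Circ × Circ,
      orbitSum c (density J g (polarize c f) (polarize c h)) p ≤ orbitSum c (density J g f h) p ∧
      (reflDiff f c p.1 * reflDiff h c p.2 < 0 →
        orbitSum c (density J g (polarize c f) (polarize c h)) p <
          orbitSum c (density J g f h) p) := by
  filter_upwards [ae_pair_norm_mem_Ioo c,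
    Measure.quasiMeasurePreserving_fst.ae (ae_circSin_sub_ne_zero c),
    Measure.quasiMeasurePreserving_snd.ae (ae_circSin_sub_ne_zero c)] with p hp hp_fst hp_snd
  exact orbitSum_density_polarize hJ hg f h hp.1 hp.2 hp_fst hp_snd

lemma measurable_density (hJ : Measurable J) (hg : Measurable g) (hf : Measurable f)
    (hh : Measurable h) : Measurable (density J g f h) := by
  unfold density
  fun_prop

lemma measurable_of_strictConvexOn (hJ : StrictConvexOn ℝ univ J) : Measurable J :=
  (continuousOn_univ.mp (hJ.convexOn.continuousOn isOpen_univ)).measurable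

lemma density_nonneg (hJ0 : ∀ t, 0 ≤ J t) (hg0 : ∀ r, 0 ≤ g r) (f h : Circ → ℝ)
    (p : Circ × Circ) : 0 ≤ density J g f h p :=
  mul_nonneg (hJ0 _) (hg0 _)

lemma four_mul_energy (hJ : Measurable J) (hJ0 : ∀ t, 0 ≤ J t) (hg : Measurable g)
    (hg0 : ∀ r, 0 ≤ g r) (hf : Measurable f) (hh : Measurable h) (c : Circ) :
    4 * energy J g f h = ∫⁻ p, ENNReal.ofReal (orbitSum c (density J g f h) p) :=
  (lintegral_orbitSum c (measurable_density hJ hg hf hh) (density_nonneg hJ0 hg0 f h)).symm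

lemma energy_polarize_le (hJ0 : ∀ t, 0 ≤ J t) (hJ : StrictConvexOn ℝ univ J) (hg : Measurable g)
    (hg0 : ∀ r, 0 ≤ g r) (hg_anti : StrictAntiOn g (Ioo 0 π)) (hf : Measurable f)
    (hh : Measurable h) (c : Circ) :
    energy J g (polarize c f) (polarize c h) ≤ energy J g f h := by
  have hJ_meas := measurable_of_strictConvexOn hJ
  rw [← ENNReal.mul_le_mul_iff_right four_ne_zero ENNReal.ofNat_ne_top,
    four_mul_energy hJ_meas hJ0 hg hg0 hf hh c, four_mul_energy hJ_meas hJ0 hg hg0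
      (measurable_polarize c hf) (measurable_polarize c hh) c]
  exact lintegral_mono_ae ((ae_orbitSum_density_polarize hJ hg_anti c f h).mono fun p hp ↦
    ENNReal.ofReal_le_ofReal hp.1)

lemma ae_reflDiff_mul_reflDiff_nonneg_of_energy_polarize_eq (hJ0 : ∀ t, 0 ≤ J t)
    (hJ : StrictConvexOn ℝ univ J) (hg : Measurable g) (hg0 : ∀ r, 0 ≤ g r)
    (hg_anti : StrictAntiOn g (Ioo 0 π)) (hf : Measurable f) (hh : Measurable h)
    (h_fin : energy J g f h ≠ ⊤)
    (h_eq : energy J g (polarize c f) (polarize c h) = energy J g f h) :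
    ∀ᵐ p : Circ × Circ, 0 ≤ reflDiff f c p.1 * reflDiff h c p.2 := by
  have hJ_meas := measurable_of_strictConvexOn hJ
  have compare := ae_orbitSum_density_polarize hJ hg_anti c f h
  have four_mul_eq := congrArg (4 * ·) h_eq
  have four_mul_ne_top := ENNReal.mul_ne_top (ENNReal.ofNat_ne_top (n := 4)) (h_eq.trans_ne h_fin)
  simp only [four_mul_energy hJ_meas hJ0 hg hg0 hf hh c, four_mul_energy hJ_meas hJ0 hg hg0
      (measurable_polarize c hf) (measurable_polarize c hh) c] at four_mul_eq four_mul_ne_top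
  have orbitSum_eq := ae_eq_of_ae_le_of_lintegral_le
    (compare.mono fun p hp ↦ ENNReal.ofReal_le_ofReal hp.1) four_mul_ne_top
    (measurable_orbitSum c (measurable_density hJ_meas hg hf hh)).ennreal_ofReal.aemeasurable
    four_mul_eq.ge
  filter_upwards [compare, orbitSum_eq] with p hp hp_eq
  by_contra! h_neg
  refine (hp.2 h_neg).ne ((ENNReal.ofReal_eq_ofReal_iff ?_ ?_).mp hp_eq) <;>
    exact orbitSum_nonneg (density_nonneg hJ0 hg0 _ _) p

lemma energy_polarizeList_le (hJ0 : ∀ t, 0 ≤ J t) (hJ : StrictConvexOn ℝ univ J)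
    (hg : Measurable g) (hg0 : ∀ r, 0 ≤ g r) (hg_anti : StrictAntiOn g (Ioo 0 π))
    (hf : Measurable f) (hh : Measurable h) (l : List Circ) :
    energy J g (polarizeList l f) (polarizeList l h) ≤ energy J g f h := by
  induction l with
  | nil => exact le_rfl
  | cons c l ih =>
    exact (energy_polarize_le hJ0 hJ hg hg0 hg_anti (measurable_polarizeList hf l)
      (measurable_polarizeList hh l) c).trans ih

lemma energy_le_of_tendsto (hJ : Continuous J) (hg : Measurable g) {f h : ℕ → Circ → ℝ}
    {f' h' : Circ → ℝ} (hf : ∀ n, Measurable (f n)) (hh : ∀ n, Measurable (h n))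
    (hf_lim : ∀ᵐ x, Tendsto (fun n ↦ f n x) atTop (𝓝 (f' x)))
    (hh_lim : ∀ᵐ x, Tendsto (fun n ↦ h n x) atTop (𝓝 (h' x))) {C : ℝ≥0∞}
    (hC : ∀ n, energy J g (f n) (h n) ≤ C) : energy J g f' h' ≤ C := by
  have density_lim : ∀ᵐ p : Circ × Circ,
      Tendsto (fun n ↦ ENNReal.ofReal (density J g (f n) (h n) p)) atTop
        (𝓝 (ENNReal.ofReal (density J g f' h' p))) := by
    filter_upwards [Measure.quasiMeasurePreserving_fst.ae hf_lim,
      Measure.quasiMeasurePreserving_snd.ae hh_lim] with p hp_fst hp_snd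
    exact ENNReal.tendsto_ofReal (((hJ.tendsto _).comp (hp_fst.sub hp_snd)).mul_const _)
  calc energy J g f' h'
      = ∫⁻ p, liminf (fun n ↦ ENNReal.ofReal (density J g (f n) (h n) p)) atTop :=
        lintegral_congr_ae (density_lim.mono fun p hp ↦ hp.liminf_eq.symm)
    _ ≤ liminf (fun n ↦ energy J g (f n) (h n)) atTop :=
        lintegral_liminf_le fun n ↦
          (measurable_density hJ.measurable hg (hf n) (hh n)).ennreal_ofReal
    _ ≤ C := liminf_le_of_le (by isBoundedDefault) fun b hb ↦
        (hb.exists.elim fun n hn ↦ hn.trans (hC n))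

theorem energy_rearr_le (hJ0 : ∀ t, 0 ≤ J t) (hJ : StrictConvexOn ℝ univ J) (hg : Measurable g)
    (hg0 : ∀ r, 0 ≤ g r) (hg_anti : StrictAntiOn g (Ioo 0 π)) (hf : Measurable f)
    (hh : Measurable h) (hf0 : ∀ x, 0 ≤ f x) (hh0 : ∀ x, 0 ≤ h x) :
    energy J g (rearr f) (rearr h) ≤ energy J g f h := by
  obtain ⟨l, hl⟩ := exists_polarizeList_tendsto (f := ![f, h]) (k := ![rearr f, rearr h])
    (Fin.forall_fin_two.mpr ⟨hf, hh⟩)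
    (Fin.forall_fin_two.mpr ⟨measurable_rearr hf, measurable_rearr hh⟩)
    (Fin.forall_fin_two.mpr ⟨(identDistrib_rearr hf hf0).symm, (identDistrib_rearr hh hh0).symm⟩)
    (Fin.forall_fin_two.mpr ⟨rearr_radiallyAntitone hf, rearr_radiallyAntitone hh⟩)
  exact energy_le_of_tendsto (continuousOn_univ.mp (hJ.convexOn.continuousOn isOpen_univ)) hg
    (fun n ↦ measurable_polarizeList hf (l n)) (fun n ↦ measurable_polarizeList hh (l n))
    (hl 0) (hl 1) fun n ↦ energy_polarizeList_le hJ0 hJ hg hg0 hg_anti hf hh (l n)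

-- The energy of the polarized pair lies between those of the rearranged and the given one.
lemma ae_reflDiff_mul_reflDiff_nonneg_of_energy_rearr_eq (hJ0 : ∀ t, 0 ≤ J t)
    (hJ : StrictConvexOn ℝ univ J) (hg : Measurable g) (hg0 : ∀ r, 0 ≤ g r)
    (hg_anti : StrictAntiOn g (Ioo 0 π)) (hf : Measurable f) (hh : Measurable h)
    (hf0 : ∀ x, 0 ≤ f x) (hh0 : ∀ x, 0 ≤ h x) (h_fin : energy J g f h ≠ ⊤)
    (h_eq : energy J g (rearr f) (rearr h) = energy J g f h) (c : Circ) :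
    ∀ᵐ p : Circ × Circ, 0 ≤ reflDiff f c p.1 * reflDiff h c p.2 := by
  refine ae_reflDiff_mul_reflDiff_nonneg_of_energy_polarize_eq hJ0 hJ hg hg0 hg_anti hf hh h_fin
    ((energy_polarize_le hJ0 hJ hg hg0 hg_anti hf hh c).antisymm ?_)
  have rearr_le := energy_rearr_le hJ0 hJ hg hg0 hg_anti (measurable_polarize c hf)
    (measurable_polarize c hh) (le_polarizeList hf0 [c]) (le_polarizeList hh0 [c])
  rwa [rearr_congr (identDistrib_polarize c hf), rearr_congr (identDistrib_polarize c hh), h_eq]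
    at rearr_le

end Energy

section ProductSign

variable {α β : Type*} [MeasurableSpace α] [MeasurableSpace β] {μ : Measure α} {ν : Measure β}
  {a : α → ℝ} {b : β → ℝ}

lemma ae_mul_integral_nonneg [SFinite ν] (h : ∀ᵐ p ∂μ.prod ν, 0 ≤ a p.1 * b p.2) :
    ∀ᵐ x ∂μ, 0 ≤ a x * ∫ y, b y ∂ν := by
  filter_upwards [Measure.ae_ae_of_ae_prod h] with x hx
  rw [← integral_const_mul]
  exact integral_nonneg_of_ae hx

lemma integral_mul_integral_nonneg [SFinite ν] (h : ∀ᵐ p ∂μ.prod ν, 0 ≤ a p.1 * b p.2) :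
    0 ≤ (∫ x, a x ∂μ) * ∫ y, b y ∂ν := by
  rw [← integral_mul_const]
  exact integral_nonneg_of_ae (ae_mul_integral_nonneg h)

lemma ae_eq_zero_or_ae_eq_zero_of_integral_eq_zero [SFinite ν]
    (h : ∀ᵐ p ∂μ.prod ν, 0 ≤ a p.1 * b p.2) (hb : Integrable b ν) (hb_zero : ∫ y, b y ∂ν = 0) :
    a =ᵐ[μ] 0 ∨ b =ᵐ[ν] 0 := by
  refine or_iff_not_imp_left.mpr fun ha ↦ ?_
  obtain ⟨x, ax_ne_zero, hx : ∀ᵐ y ∂ν, 0 ≤ a x * b y⟩ :=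
    ((not_eventually.mp ha).and_eventually (Measure.ae_ae_of_ae_prod h)).exists
  have ax_mul_b := (integral_eq_zero_iff_of_nonneg_ae hx (hb.const_mul (a x))).mp
    (by rw [integral_const_mul, hb_zero, mul_zero])
  exact ax_mul_b.mono fun y hy ↦ (mul_eq_zero.mp hy).resolve_left ax_ne_zero

lemma ae_swap_mul_nonneg [SFinite μ] [SFinite ν] (h : ∀ᵐ p ∂μ.prod ν, 0 ≤ a p.1 * b p.2) :
    ∀ᵐ p ∂ν.prod μ, 0 ≤ b p.1 * a p.2 :=
  (Measure.measurePreserving_swap.quasiMeasurePreserving.ae h).mono fun _ hp ↦ by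
    rwa [mul_comm]

end ProductSign

section DivisibleGroup

open scoped Pointwise

variable {G : Type*} [AddCommGroup G] [DivisibleBy G ℤ] {H K : AddSubgroup G}

lemma eq_top_of_finiteIndex (H : AddSubgroup G) [H.FiniteIndex] : H = ⊤ := by
  refine (AddSubgroup.eq_top_iff' H).mpr fun x ↦ ?_
  have index_ne_zero : (H.index : ℤ) ≠ 0 := mod_cast AddSubgroup.FiniteIndex.index_ne_zero
  rw [← DivisibleBy.div_cancel x index_ne_zero, natCast_zsmul]
  exact H.nsmul_index_mem _

lemma eq_top_or_eq_top_of_cover {a b : G} (h : ∀ x, x - a ∈ H ∨ x - b ∈ K) :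
    H = ⊤ ∨ K = ⊤ := by
  have cover : ⋃ i ∈ (Finset.univ : Finset (Fin 2)),
      ![a, b] i +ᵥ (![H, K] i : Set G) = univ := by
    refine eq_univ_of_forall fun x ↦ ?_
    simpa [mem_vadd_set_iff_neg_vadd_mem, neg_add_eq_sub] using h x
  obtain ⟨i, -, finiteIndex⟩ := AddSubgroup.exists_finiteIndex_of_leftCoset_cover cover
  have eq_top := eq_top_of_finiteIndex (![H, K] i)
  fin_cases i
  exacts [.inl eq_top, .inr eq_top]

end DivisibleGroup

/-- The group of almost everywhere periods of `w`. -/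
def aePeriods (w : Circ → ℝ) : AddSubgroup Circ where
  carrier := {b | ∀ᵐ x, w (b + x) = w x}
  zero_mem' := by simp
  add_mem' {a b} ha hb := by
    change ∀ᵐ x, w (a + b + x) = w x
    filter_upwards [(eventually_add_left_iff volume b).mpr ha, hb] with x h_ab h_b
    rw [add_assoc, h_ab, h_b]
  neg_mem' {a} ha := by
    change ∀ᵐ x, w (-a + x) = w x
    filter_upwards [(eventually_add_left_iff volume (-a)).mpr ha] with x hx
    rw [← hx, add_neg_cancel_left]

/-- `f` is polarized towards `z` if, for every reflection and almost every `x`, the larger one of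
the values of `f` at `x` and its mirror image is attained on the side of `z`. -/
def PolarizedTowards (f : Circ → ℝ) (z : Circ) : Prop :=
  ∀ c, ∀ᵐ x, 0 ≤ reflDiff f c x * circSin (z - c)

section EqualityCase

variable {f h w : Circ → ℝ} {c z : Circ}

lemma ae_ae_of_forall_ae_sub {P : Circ → Circ → Prop}
    (hP : MeasurableSet {p : Circ × Circ | P p.1 p.2}) (h : ∀ b, ∀ᵐ x, P x (b - x)) :
    ∀ᵐ x, ∀ᵐ y, P x y := by
  have measurable_shear : Measurable fun p : Circ × Circ ↦ (p.2, p.1 - p.2) := by fun_prop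
  have ae_ae := (Measure.ae_ae_comm (μ := volume) (ν := volume)
    (p := fun b x ↦ P x (b - x)) (measurable_shear hP)).mp (.of_forall h)
  exact ae_ae.mono fun x ↦ (eventually_sub_right_iff volume x).mp

lemma exists_ae_eq_const_of_aePeriods_eq_top (hw : Measurable w) (h : aePeriods w = ⊤) :
    ∃ k, ∀ᵐ x, w x = k := by
  have ae_neg (b : Circ) : ∀ᵐ x, w (b - x) = w (-x) := by
    have hb : b ∈ aePeriods w := h ▸ AddSubgroup.mem_top b
    simpa only [sub_eq_add_neg] using
      (Measure.measurePreserving_neg volume).quasiMeasurePreserving.ae hb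
  have ae_ae := ae_ae_of_forall_ae_sub (P := fun x y ↦ w y = w (-x))
    (measurableSet_eq_fun (by fun_prop) (by fun_prop)) ae_neg
  obtain ⟨x, hx⟩ := ae_ae.exists
  exact ⟨w (-x), hx⟩

lemma exists_forall_sub_mem_aePeriods (w : Circ → ℝ) :
    ∃ a, ∀ b, (∀ᵐ x, w (b - x) = w x) → b - a ∈ aePeriods w := by
  by_cases h : ∃ a, ∀ᵐ x, w (a - x) = w x
  · obtain ⟨a, ha⟩ := h
    refine ⟨a, fun b hb ↦ ?_⟩
    have hb_sub := (Measure.measurePreserving_sub_left volume a).quasiMeasurePreserving.ae hb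
    filter_upwards [ha, hb_sub] with x ha hb
    rw [← ha, ← hb]
    congr 1
    abel
  · exact ⟨0, fun b hb ↦ absurd ⟨b, hb⟩ h⟩

-- The reflections leaving a function invariant form a coset of its period group, and the
-- divisible group `Circ` is not covered by two cosets of proper subgroups.
lemma ae_eq_const_or_ae_eq_const_of_forall_reflect (hf : Measurable f) (hh : Measurable h)
    (h_refl : ∀ c, (∀ᵐ x, f (reflect c x) = f x) ∨ ∀ᵐ x, h (reflect c x) = h x) :
    (∃ k, ∀ᵐ x, f x = k) ∨ ∃ k, ∀ᵐ x, h x = k := by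
  obtain ⟨a, ha⟩ := exists_forall_sub_mem_aePeriods f
  obtain ⟨b, hb⟩ := exists_forall_sub_mem_aePeriods h
  have cover (x : Circ) : x - a ∈ aePeriods f ∨ x - b ∈ aePeriods h := by
    obtain ⟨c, rfl⟩ := exists_add_self_eq x
    exact (h_refl c).imp (ha _) (hb _)
  exact (eq_top_or_eq_top_of_cover cover).imp (exists_ae_eq_const_of_aePeriods_eq_top hf)
    (exists_ae_eq_const_of_aePeriods_eq_top hh)

lemma ae_reflect_eq_of_reflDiff_ae_eq_zero (h : reflDiff f c =ᵐ[volume] 0) :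
    ∀ᵐ x, f (reflect c x) = f x := by
  filter_upwards [h, ae_circSin_sub_ne_zero c] with x hx sin_ne_zero
  exact (sub_eq_zero.mp ((mul_eq_zero.mp hx).resolve_right sin_ne_zero)).symm

lemma integrable_mul_circSin_sub (hf : Integrable f) (c : Circ) :
    Integrable fun x ↦ f x * circSin (x - c) :=
  hf.mul_bdd (c := 1) (continuous_circSin.comp (continuous_sub_right c)).aestronglyMeasurable
    (.of_forall fun x ↦ abs_circSin_le_one (x - c))

lemma integrable_mul_circCos (hf : Integrable f) : Integrable fun x ↦ f x * circCos x :=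
  hf.mul_bdd (c := 1) continuous_circCos.aestronglyMeasurable (.of_forall abs_circCos_le_one)

lemma reflDiff_eq_add (f : Circ → ℝ) (c x : Circ) : reflDiff f c x =
    f x * circSin (x - c) + f (reflect c x) * circSin (reflect c x - c) := by
  rw [reflDiff, circSin_reflect_sub]
  ring

lemma integrable_reflDiff (hf : Integrable f) (c : Circ) : Integrable (reflDiff f c) := by
  have hfc := integrable_mul_circSin_sub hf c
  exact (hfc.add (integrable_comp_reflect hfc c)).congr
    (.of_forall fun x ↦ (reflDiff_eq_add f c x).symm)

lemma integral_mul_circSin_sub (hf : Integrable f) (c : Circ) :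
    ∫ x, f x * circSin (x - c) =
      (∫ x, f x * circSin x) * circCos c - (∫ x, f x * circCos x) * circSin c := by
  have circSin_sub (x : Circ) : f x * circSin (x - c) =
      f x * circSin x * circCos c - f x * circCos x * circSin c := by
    rw [sub_eq_add_neg, circSin_add, circCos_neg, circSin_neg]
    ring
  have integrable_sin : Integrable fun x ↦ f x * circSin x := by
    simpa using integrable_mul_circSin_sub hf 0
  simp only [circSin_sub]
  rw [integral_sub (integrable_sin.mul_const _) ((integrable_mul_circCos hf).mul_const _),
    integral_mul_const, integral_mul_const]

lemma integral_reflDiff (hf : Integrable f) (c : Circ) :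
    ∫ x, reflDiff f c x = 2 * ∫ x, f x * circSin (x - c) := by
  have hfc := integrable_mul_circSin_sub hf c
  simp only [reflDiff_eq_add]
  rw [integral_add hfc (integrable_comp_reflect hfc c),
    integral_comp_reflect (fun x ↦ f x * circSin (x - c))]
  ring

lemma exists_integral_reflDiff_eq (hf : Integrable f) :
    ∃ ρ ≥ 0, ∃ z, ∀ c, ∫ x, reflDiff f c x = ρ * circSin (z - c) := by
  let w : ℂ := ⟨∫ x, f x * circCos x, ∫ x, f x * circSin x⟩
  refine ⟨2 * ‖w‖, by positivity, (w.arg : ℝ), fun c ↦ ?_⟩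
  have re_eq : ‖w‖ * Real.cos w.arg = ∫ x, f x * circCos x := Complex.norm_mul_cos_arg w
  have im_eq : ‖w‖ * Real.sin w.arg = ∫ x, f x * circSin x := Complex.norm_mul_sin_arg w
  rw [integral_reflDiff hf, integral_mul_circSin_sub hf, ← re_eq, ← im_eq,
    sub_eq_add_neg (_ : Circ), circSin_add, circCos_neg, circSin_neg, circSin_coe, circCos_coe]
  ring

lemma eq_of_forall_circSin_sub_mul_nonneg {z' : Circ}
    (h : ∀ c, 0 ≤ circSin (z - c) * circSin (z' - c)) : z = z' := by
  obtain ⟨c, hc⟩ := exists_add_self_eq (z + z')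
  have key := circCos_sub_sub_circCos_sub_reflect c z z'
  rw [reflect, hc, add_sub_cancel_right, sub_self] at key
  have circCos_le : circCos 0 ≤ circCos (z - z') := by linarith [h c]
  rw [circCos_le_circCos_iff, norm_zero] at circCos_le
  exact sub_eq_zero.mp (norm_le_zero_iff.mp circCos_le)

lemma ae_eq_const_or_ae_eq_const_of_integral_reflDiff_eq_zero (hf : Measurable f)
    (hh : Measurable h) (hh_int : Integrable h) (hh_zero : ∀ c, ∫ x, reflDiff h c x = 0)
    (h_nonneg : ∀ c, ∀ᵐ p : Circ × Circ, 0 ≤ reflDiff f c p.1 * reflDiff h c p.2) :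
    (∃ k, ∀ᵐ x, f x = k) ∨ ∃ k, ∀ᵐ x, h x = k :=
  ae_eq_const_or_ae_eq_const_of_forall_reflect hf hh fun c ↦
    (ae_eq_zero_or_ae_eq_zero_of_integral_eq_zero (h_nonneg c) (integrable_reflDiff hh_int c)
      (hh_zero c)).imp ae_reflect_eq_of_reflDiff_ae_eq_zero ae_reflect_eq_of_reflDiff_ae_eq_zero

lemma polarizedTowards_of_integral_reflDiff_eq {ρ : ℝ} (hρ : 0 < ρ)
    (hh : ∀ c, ∫ x, reflDiff h c x = ρ * circSin (z - c))
    (h_nonneg : ∀ c, ∀ᵐ p : Circ × Circ, 0 ≤ reflDiff f c p.1 * reflDiff h c p.2) :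
    PolarizedTowards f z := fun c ↦ by
  filter_upwards [ae_mul_integral_nonneg (h_nonneg c)] with x hx
  rw [hh, mul_left_comm] at hx
  exact nonneg_of_mul_nonneg_right hx hρ

lemma exists_polarizedTowards_of_integrable (hf : Measurable f) (hh : Measurable h)
    (hf_int : Integrable f) (hh_int : Integrable h)
    (h_nonneg : ∀ c, ∀ᵐ p : Circ × Circ, 0 ≤ reflDiff f c p.1 * reflDiff h c p.2) :
    (∃ k, ∀ᵐ x, f x = k) ∨ (∃ k, ∀ᵐ x, h x = k) ∨
      ∃ z, PolarizedTowards f z ∧ PolarizedTowards h z := by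
  have h_swap (c : Circ) := ae_swap_mul_nonneg (h_nonneg c)
  obtain ⟨ρ, hρ, z, hf_eq⟩ := exists_integral_reflDiff_eq hf_int
  obtain ⟨σ, hσ, z', hh_eq⟩ := exists_integral_reflDiff_eq hh_int
  rcases hρ.eq_or_lt with rfl | hρ
  · exact (ae_eq_const_or_ae_eq_const_of_integral_reflDiff_eq_zero hh hf hf_int
      (by simpa using hf_eq) h_swap).symm.imp_right .inl
  rcases hσ.eq_or_lt with rfl | hσ
  · exact (ae_eq_const_or_ae_eq_const_of_integral_reflDiff_eq_zero hf hh hh_int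
      (by simpa using hh_eq) h_nonneg).imp_right .inl
  have center_eq : z = z' := eq_of_forall_circSin_sub_mul_nonneg fun c ↦ by
    have integral_nonneg := integral_mul_integral_nonneg (h_nonneg c)
    rw [hf_eq, hh_eq, mul_mul_mul_comm] at integral_nonneg
    exact nonneg_of_mul_nonneg_right integral_nonneg (mul_pos hρ hσ)
  subst center_eq
  exact .inr (.inr ⟨z, polarizedTowards_of_integral_reflDiff_eq hσ hh_eq h_nonneg,
    polarizedTowards_of_integral_reflDiff_eq hρ hf_eq h_swap⟩)

lemma reflDiff_comp_mul_nonneg_iff {φ : ℝ → ℝ} (hφ : StrictMono φ) (f : Circ → ℝ) (c x : Circ)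
    (s : ℝ) : 0 ≤ reflDiff (φ ∘ f) c x * s ↔ 0 ≤ reflDiff f c x * s := by
  simp only [reflDiff, mul_assoc, mul_nonneg_iff, Function.comp_apply, sub_nonneg, sub_nonpos,
    hφ.le_iff_le]

-- Composing with `arctan` makes both functions integrable.
theorem exists_polarizedTowards (hf : Measurable f) (hh : Measurable h)
    (h_nonneg : ∀ c, ∀ᵐ p : Circ × Circ, 0 ≤ reflDiff f c p.1 * reflDiff h c p.2) :
    (∃ k, ∀ᵐ x, f x = k) ∨ (∃ k, ∀ᵐ x, h x = k) ∨
      ∃ z, PolarizedTowards f z ∧ PolarizedTowards h z := by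
  have integrable_arctan {w : Circ → ℝ} (hw : Measurable w) : Integrable (arctan ∘ w) :=
    .of_bound (measurable_arctan.comp hw).aestronglyMeasurable (π / 2)
      (.of_forall fun x ↦ (abs_lt.mpr ⟨neg_pi_div_two_lt_arctan _, arctan_lt_pi_div_two _⟩).le)
  have const_of_arctan {w : Circ → ℝ} :
      (∃ k, ∀ᵐ x, (arctan ∘ w) x = k) → ∃ k, ∀ᵐ x, w x = k := fun ⟨k, hk⟩ ↦
    ⟨Real.tan k, hk.mono fun x hx ↦ by rw [← hx, Function.comp_apply, tan_arctan]⟩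
  have polarized_of_arctan {w : Circ → ℝ} {z : Circ} :
      PolarizedTowards (arctan ∘ w) z → PolarizedTowards w z := fun hz c ↦
    (hz c).mono fun x ↦ (reflDiff_comp_mul_nonneg_iff arctan_strictMono w c x _).mp
  refine (exists_polarizedTowards_of_integrable (measurable_arctan.comp hf)
    (measurable_arctan.comp hh) (integrable_arctan hf) (integrable_arctan hh) fun c ↦ ?_).imp
      const_of_arctan (.imp const_of_arctan fun ⟨z, hz, hz'⟩ ↦
        ⟨z, polarized_of_arctan hz, polarized_of_arctan hz'⟩)
  filter_upwards [h_nonneg c] with p hp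
  rwa [reflDiff_comp_mul_nonneg_iff arctan_strictMono, mul_comm,
    reflDiff_comp_mul_nonneg_iff arctan_strictMono, mul_comm]

lemma identDistrib_comp_add_right (hf : Measurable f) (z : Circ) :
    IdentDistrib (fun x ↦ f (x + z)) f volume volume :=
  identDistrib_of_volume_setOf_lt_eq (by fun_prop) hf fun t ↦
    measure_preimage_add_right volume z {x | t < f x}

lemma PolarizedTowards.ae_eq_rearr (hz : PolarizedTowards f z) (hf : Measurable f)
    (hf0 : ∀ x, 0 ≤ f x) : ∀ᵐ x, f (x + z) = rearr f x := by
  have hf_add : Measurable fun x ↦ f (x + z) := by fun_prop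
  have measurable_cos : Measurable circCos := continuous_circCos.measurable
  rw [← rearr_congr (identDistrib_comp_add_right hf z)]
  refine ae_eq_of_radiallyAntitone hf_add (measurable_rearr hf_add)
    (identDistrib_rearr hf_add fun _ ↦ hf0 _).symm (rearr_radiallyAntitone hf_add)
    (ae_ae_of_forall_ae_sub (measurableSet_le measurable_const (by fun_prop)) fun b ↦ ?_)
  obtain ⟨c, rfl⟩ := exists_add_self_eq b
  filter_upwards [(eventually_add_right_iff volume z).mpr (hz (c + z))] with x hx
  have cos_sub := circCos_sub_sub_circCos_sub_reflect c 0 x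
  rw [reflDiff, add_sub_add_right_eq_sub, sub_add_cancel_right, reflect] at hx
  rw [zero_sub, zero_sub, zero_sub, circCos_neg, circCos_neg, reflect] at cos_sub
  rw [show c + z + (c + z) - (x + z) = c + c - x + z by abel] at hx
  rw [cos_sub]
  linarith

end EqualityCase

section EnergyEquality

variable {J g : ℝ → ℝ} {f f' h h' : Circ → ℝ} {k : ℝ}

lemma energy_congr (J g : ℝ → ℝ) (hf : ∀ᵐ x, f x = f' x) (hh : ∀ᵐ x, h x = h' x) :
    energy J g f h = energy J g f' h' := by
  refine lintegral_congr_ae ?_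
  filter_upwards [Measure.quasiMeasurePreserving_fst.ae hf,
    Measure.quasiMeasurePreserving_snd.ae hh] with p hfp hhp
  rw [density, density, hfp, hhp]

lemma energy_swap (J g : ℝ → ℝ) (f h : Circ → ℝ) :
    energy J g f h = energy (fun t ↦ J (-t)) g h f := by
  unfold energy
  rw [Measure.volume_eq_prod, ← lintegral_prod_swap]
  simp only [density, Prod.fst_swap, Prod.snd_swap, neg_sub, norm_sub_rev]

lemma energy_const_left (hJ : Measurable J) (hJ0 : ∀ t, 0 ≤ J t) (hg : Measurable g)
    (hh : Measurable h) (k : ℝ) :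
    energy J g (fun _ ↦ k) h =
      ∫⁻ y, ENNReal.ofReal (J (k - h y)) * ∫⁻ x : Circ, ENNReal.ofReal (g ‖x‖) := by
  have h_meas := (measurable_density hJ hg (measurable_const (a := k)) hh).ennreal_ofReal
  unfold energy
  rw [Measure.volume_eq_prod, lintegral_prod_symm' _ h_meas]
  refine lintegral_congr fun y ↦ ?_
  simp only [density, ENNReal.ofReal_mul (hJ0 _)]
  rw [lintegral_const_mul _ (by fun_prop),
    lintegral_sub_right_eq_self (fun x : Circ ↦ ENNReal.ofReal (g ‖x‖)) y]

lemma rearr_ae_eq_const (hf : Measurable f) (hf0 : ∀ x, 0 ≤ f x) (h_const : ∀ᵐ x, f x = k) :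
    ∀ᵐ x, rearr f x = k :=
  (identDistrib_rearr hf hf0).symm.ae_snd (p := (· = k)) (measurableSet_singleton k) h_const

lemma energy_rearr_eq_of_left_ae_eq_const (hJ : Measurable J) (hJ0 : ∀ t, 0 ≤ J t)
    (hg : Measurable g) (hf : Measurable f) (hh : Measurable h) (hf0 : ∀ x, 0 ≤ f x)
    (hh0 : ∀ x, 0 ≤ h x) (h_const : ∀ᵐ x, f x = k) :
    energy J g (rearr f) (rearr h) = energy J g f h := by
  have h_phi : Measurable fun s ↦
    ENNReal.ofReal (J (k - s)) * ∫⁻ x : Circ, ENNReal.ofReal (g ‖x‖) := by fun_prop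
  rw [energy_congr J g h_const (.of_forall fun x ↦ Eq.refl (h x)),
    energy_congr J g (rearr_ae_eq_const hf hf0 h_const) (.of_forall fun x ↦ Eq.refl (rearr h x)),
    energy_const_left hJ hJ0 hg hh, energy_const_left hJ hJ0 hg (measurable_rearr hh)]
  exact ((identDistrib_rearr hh hh0).comp h_phi).lintegral_eq

lemma energy_rearr_eq_of_right_ae_eq_const (hJ : Measurable J) (hJ0 : ∀ t, 0 ≤ J t)
    (hg : Measurable g) (hf : Measurable f) (hh : Measurable h) (hf0 : ∀ x, 0 ≤ f x)
    (hh0 : ∀ x, 0 ≤ h x) (h_const : ∀ᵐ x, h x = k) :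
    energy J g (rearr f) (rearr h) = energy J g f h := by
  rw [energy_swap, energy_swap J g f]
  exact energy_rearr_eq_of_left_ae_eq_const (hJ.comp measurable_neg) (fun t ↦ hJ0 (-t)) hg hh hf
    hh0 hf0 h_const

lemma energy_comp_add_right (hJ : Measurable J) (hg : Measurable g) (hf : Measurable f)
    (hh : Measurable h) (z : Circ) :
    energy J g (fun x ↦ f (x + z)) (fun x ↦ h (x + z)) = energy J g f h := by
  have h_add := (measurePreserving_add_right volume z).prod (measurePreserving_add_right volume z)
  have h_comp := h_add.lintegral_comp (measurable_density hJ hg hf hh).ennreal_ofReal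
  simp only [density, Prod.map_fst, Prod.map_snd, add_sub_add_right_eq_sub] at h_comp
  exact h_comp

theorem energy_rearr_eq_iff (hJ0 : ∀ t, 0 ≤ J t) (hJ : StrictConvexOn ℝ univ J)
    (hg : Measurable g) (hg0 : ∀ r, 0 ≤ g r) (hg_anti : StrictAntiOn g (Ioo 0 π))
    (hf : Measurable f) (hh : Measurable h) (hf0 : ∀ x, 0 ≤ f x) (hh0 : ∀ x, 0 ≤ h x)
    (h_fin : energy J g f h ≠ ⊤) :
    energy J g (rearr f) (rearr h) = energy J g f h ↔
      (∃ k, ∀ᵐ x, f x = k) ∨ (∃ k, ∀ᵐ x, h x = k) ∨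
        ∃ z, (∀ᵐ x, f (x + z) = rearr f x) ∧ ∀ᵐ x, h (x + z) = rearr h x := by
  have hJ_meas := measurable_of_strictConvexOn hJ
  constructor
  · intro h_eq
    refine (exists_polarizedTowards hf hh
      (ae_reflDiff_mul_reflDiff_nonneg_of_energy_rearr_eq hJ0 hJ hg hg0 hg_anti hf hh hf0 hh0
        h_fin h_eq)).imp_right (Or.imp_right ?_)
    exact fun ⟨z, hfz, hhz⟩ ↦ ⟨z, hfz.ae_eq_rearr hf hf0, hhz.ae_eq_rearr hh hh0⟩
  · rintro (⟨k, h_const⟩ | ⟨k, h_const⟩ | ⟨z, hfz, hhz⟩)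
    · exact energy_rearr_eq_of_left_ae_eq_const hJ_meas hJ0 hg hf hh hf0 hh0 h_const
    · exact energy_rearr_eq_of_right_ae_eq_const hJ_meas hJ0 hg hf hh hf0 hh0 h_const
    · rw [← energy_congr J g hfz hhz, energy_comp_add_right hJ_meas hg hf hh]

end EnergyEquality

/-- The function on the circle given by the values of `u` on `[-π, π)`. -/
noncomputable def onCirc (u : ℝ → ℝ) : Circ → ℝ := AddCircle.liftIco (2 * π) (-π) u

section Transfer

variable {J g u v : ℝ → ℝ} {a b : Circ → ℝ} {p : Circ → Prop} {x : ℝ}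

lemma onCirc_apply (u : ℝ → ℝ) (b : Circ) :
    onCirc u b = u (AddCircle.equivIco (2 * π) (-π) b) := rfl

lemma measurable_onCirc (hu : Measurable u) : Measurable (onCirc u) :=
  hu.comp (measurable_subtype_coe.comp (AddCircle.measurableEquivIco (2 * π) (-π)).measurable)

lemma onCirc_coe (u : ℝ → ℝ) (x : ℝ) : onCirc u x = periodize u x := by
  change u (toIcoMod two_pi_pos (-π) x) = _
  rw [periodize, toIcoMod, toIcoDiv_eq_floor, sub_neg_eq_add, zsmul_eq_mul, mul_comm]

lemma onCirc_coe_of_mem_Ioo (u : ℝ → ℝ) (hx : x ∈ Ioo (-π) π) : onCirc u x = u x :=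
  AddCircle.liftIco_coe_apply ⟨hx.1.le, by linarith [hx.2]⟩

lemma norm_coe_eq_abs (hx : |x| ≤ π) : ‖(x : Circ)‖ = |x| := by
  rw [AddCircle.norm_coe_eq_abs_iff (2 * π) two_pi_pos.ne', abs_of_pos two_pi_pos]
  linarith

lemma apply_norm_coe (hg_even : ∀ x, g (-x) = g x) (hg_per : Function.Periodic g (2 * π)) (x : ℝ) :
    g ‖(x : Circ)‖ = g x := by
  have abs_eq (y : ℝ) : g |y| = g y := by
    rcases abs_choice y with hy | hy <;> simp only [hy, hg_even]
  rw [AddCircle.norm_eq, abs_eq]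
  exact hg_per.sub_int_mul_eq _

lemma measurePreserving_coe :
    MeasurePreserving ((↑) : ℝ → Circ) (volume.restrict (Ioo (-π) π)) volume := by
  have h_mk := AddCircle.measurePreserving_mk (2 * π) (-π)
  rwa [show -π + 2 * π = π by ring, ← Measure.restrict_congr_set Ioo_ae_eq_Ioc] at h_mk

lemma ae_coe_iff (hp : MeasurableSet {b | p b}) :
    (∀ᵐ x ∂volume.restrict (Ioo (-π) π), p (x : ℝ)) ↔ ∀ᵐ b, p b := by
  rw [← measurePreserving_coe.map_eq,
    ae_map_iff measurePreserving_coe.measurable.aemeasurable hp]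

lemma ae_real_coe_iff (hp : MeasurableSet {b | p b}) :
    (∀ᵐ x : ℝ, p x) ↔ ∀ᵐ b, p b := by
  refine ⟨fun h ↦ (ae_coe_iff hp).mp (ae_restrict_of_ae h), fun h ↦ ?_⟩
  have h_Ioc (n : ℤ) :
      ∀ᵐ x ∂volume.restrict (Ioc (-π + n • (2 * π)) (-π + (n + 1) • (2 * π))), p (x : ℝ) := by
    have h_mk := AddCircle.measurePreserving_mk (2 * π) (-π + n • (2 * π))
    rw [add_assoc, ← add_one_zsmul] at h_mk
    exact h_mk.quasiMeasurePreserving.ae h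
  rw [← Measure.restrict_univ (μ := volume), ← iUnion_Ioc_add_zsmul two_pi_pos (-π)]
  exact (ae_restrict_iUnion_iff _ _).mpr h_Ioc

lemma volume_setOf_mem_Ioo_and_lt (hu : Measurable u) (t : ℝ) :
    volume.real {y | y ∈ Ioo (-π) π ∧ t < u y} = distribution (onCirc u) t := by
  have h_meas : MeasurableSet {b | t < onCirc u b} :=
    measurableSet_lt measurable_const (measurable_onCirc hu)
  rw [distribution, measureReal_def, measureReal_def,
    ← measurePreserving_coe.measure_preimage h_meas.nullMeasurableSet,
    Measure.restrict_apply (measurePreserving_coe.measurable h_meas), inter_comm]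
  congr 2
  ext y
  refine and_congr_right fun hy ↦ ?_
  rw [mem_preimage, mem_ofPred_eq, onCirc_coe_of_mem_Ioo u hy]

lemma symmRearr_eq_rearr (hu : Measurable u) (hx : |x| ≤ π) :
    symmRearr u x = rearr (onCirc u) x := by
  have h_meas : MeasurableSet {t | 2 * ‖(x : Circ)‖ < distribution (onCirc u) t} :=
    measurableSet_lt measurable_const (distribution_antitone _).measurable
  have indicator_eq (t : ℝ) :
      (symmSet {y | y ∈ Ioo (-π) π ∧ t < u y}).indicator (fun _ ↦ (1 : ℝ)) x =
        {t | 2 * ‖(x : Circ)‖ < distribution (onCirc u) t}.indicator 1 t := by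
    rw [symmSet, ← measureReal_def, volume_setOf_mem_Ioo_and_lt hu]
    refine indicator_eq_indicator ?_ rfl
    rw [mem_Ioo, ← abs_lt, mem_ofPred_eq, norm_coe_eq_abs hx, lt_div_iff₀' two_pos]
  simp only [symmRearr, indicator_eq]
  rw [integral_indicator_one h_meas, measureReal_restrict_apply h_meas, inter_comm]
  rfl

lemma perRearr_eq_rearr (hu : Measurable u) (x : ℝ) : perRearr u x = rearr (onCirc u) x := by
  have h_mem := (AddCircle.equivIco (2 * π) (-π) (x : Circ)).2
  rw [perRearr, ← onCirc_coe, onCirc_apply,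
    symmRearr_eq_rearr hu (abs_le.mpr ⟨h_mem.1, by linarith [h_mem.2]⟩), AddCircle.coe_equivIco]

lemma perRearr_neg (hu : Measurable u) (x : ℝ) : perRearr u (-x) = perRearr u x := by
  rw [perRearr_eq_rearr hu, perRearr_eq_rearr hu, AddCircle.coe_neg, rearr, rearr, norm_neg]

lemma lintegral_lintegral_eq_energy (hJ : Measurable J) (hg : Measurable g)
    (hg_even : ∀ x, g (-x) = g x) (hg_per : Function.Periodic g (2 * π)) (ha : Measurable a)
    (hb : Measurable b) (hu : ∀ x ∈ Ioo (-π) π, u x = a x) (hv : ∀ x ∈ Ioo (-π) π, v x = b x) :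
    ∫⁻ x in Ioo (-π) π, ∫⁻ y in Ioo (-π) π, ENNReal.ofReal (J (u x - v y) * g (x - y)) =
      energy J g a b := by
  have h_meas := (measurable_density hJ hg ha hb).ennreal_ofReal
  rw [energy, Measure.volume_eq_prod, lintegral_prod _ h_meas.aemeasurable,
    ← measurePreserving_coe.lintegral_comp h_meas.lintegral_prod_right']
  refine setLIntegral_congr_fun measurableSet_Ioo fun x hx ↦ ?_
  have h_meas_right : Measurable fun y ↦ ENNReal.ofReal (density J g a b ((x : Circ), y)) :=
    h_meas.comp measurable_prodMk_left
  rw [← measurePreserving_coe.lintegral_comp h_meas_right]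
  refine setLIntegral_congr_fun measurableSet_Ioo fun y hy ↦ ?_
  simp only [density]
  rw [hu x hx, hv y hy, ← AddCircle.coe_sub, apply_norm_coe hg_even hg_per]

lemma onCirc_ae_eq_const_iff (hu : Measurable u) (k : ℝ) :
    (∀ᵐ b, onCirc u b = k) ↔ ∀ᵐ x ∂volume.restrict (Ioo (-π) π), u x = k := by
  rw [← ae_coe_iff (measurableSet_eq_fun (measurable_onCirc hu) measurable_const)]
  refine eventually_congr ?_
  filter_upwards [ae_restrict_mem measurableSet_Ioo] with x hx
  rw [onCirc_coe_of_mem_Ioo u hx]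

lemma onCirc_add_ae_eq_rearr_iff (hu : Measurable u) (z : ℝ) :
    (∀ᵐ b, onCirc u (b + ((-z : ℝ) : Circ)) = rearr (onCirc u) b) ↔
      ∀ᵐ x, periodize u x = perRearr u (x + z) := by
  have hu_circ := measurable_onCirc hu
  have h_meas : MeasurableSet {b : Circ | onCirc u b = rearr (onCirc u) (b + (z : Circ))} :=
    measurableSet_eq_fun hu_circ ((measurable_rearr hu_circ).comp (measurable_add_const _))
  rw [← eventually_add_right_iff (volume : Measure Circ) (z : Circ)]
  simp only [AddCircle.coe_neg, add_neg_cancel_right]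
  rw [← ae_real_coe_iff h_meas]
  simp only [← onCirc_coe, perRearr_eq_rearr hu, AddCircle.coe_add]

lemma exists_circ_iff {P : Circ → Prop} : (∃ z, P z) ↔ ∃ z : ℝ, P ((-z : ℝ) : Circ) :=
  neg_surjective.exists.trans QuotientAddGroup.mk_surjective.exists

end Transfer

end CircleRearrangement

open CircleRearrangement

theorem stmt_4_general
    (J : ℝ → ℝ) (hJnonneg : ∀ t, 0 ≤ J t) (hJconv : StrictConvexOn ℝ Set.univ J)
    (g : ℝ → ℝ) (hgmeas : Measurable g) (hgnonneg : ∀ x, 0 ≤ g x)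
    (hgper : ∀ x, g (x + 2 * π) = g x) (hgeven : ∀ x, g (-x) = g x)
    (hgdec : StrictAntiOn g (Set.Ioo 0 π))
    (u v : ℝ → ℝ) (humeas : Measurable u) (hvmeas : Measurable v)
    (hu0 : ∀ x, 0 ≤ u x) (hv0 : ∀ x, 0 ≤ v x)
    (hfin : (∫⁻ x in Set.Ioo (-π) π, ∫⁻ y in Set.Ioo (-π) π,
        ENNReal.ofReal (J (u x - v y) * g (x - y))) ≠ ⊤) :
    ((∫⁻ x in Set.Ioo (-π) π, ∫⁻ y in Set.Ioo (-π) π,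
        ENNReal.ofReal (J (symmRearr u x - symmRearr v y) * g (x - y))) =
      ∫⁻ x in Set.Ioo (-π) π, ∫⁻ y in Set.Ioo (-π) π,
        ENNReal.ofReal (J (u x - v y) * g (x - y))) ↔
      ((∃ c : ℝ, ∀ᵐ x ∂(volume.restrict (Set.Ioo (-π) π)), u x = c) ∨
        (∃ c : ℝ, ∀ᵐ y ∂(volume.restrict (Set.Ioo (-π) π)), v y = c) ∨
        ∃ z : ℝ,
          (∀ᵐ x ∂(volume : Measure ℝ), periodize u x = perRearr u (x + z)) ∧
          (∀ᵐ y ∂(volume : Measure ℝ), periodize v y = perRearr v (y + z))) := by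
  have hJmeas := measurable_of_strictConvexOn hJconv
  have hu_circ := measurable_onCirc humeas
  have hv_circ := measurable_onCirc hvmeas
  have energy_eq := lintegral_lintegral_eq_energy (u := u) (v := v) hJmeas hgmeas hgeven hgper
    hu_circ hv_circ
    (fun x hx ↦ (onCirc_coe_of_mem_Ioo u hx).symm) (fun x hx ↦ (onCirc_coe_of_mem_Ioo v hx).symm)
  have energy_rearr_eq := lintegral_lintegral_eq_energy hJmeas hgmeas hgeven hgper
    (measurable_rearr hu_circ) (measurable_rearr hv_circ)
    (fun x hx ↦ symmRearr_eq_rearr humeas (abs_lt.mpr hx).le)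
    (fun x hx ↦ symmRearr_eq_rearr hvmeas (abs_lt.mpr hx).le)
  rw [energy_eq] at hfin
  rw [energy_eq, energy_rearr_eq, energy_rearr_eq_iff hJnonneg hJconv hgmeas hgnonneg hgdec
    hu_circ hv_circ (fun _ ↦ hu0 _) (fun _ ↦ hv0 _) hfin]
  simp only [exists_circ_iff, onCirc_ae_eq_const_iff humeas, onCirc_ae_eq_const_iff hvmeas,
    onCirc_add_ae_eq_rearr_iff humeas, onCirc_add_ae_eq_rearr_iff hvmeas]

theorem stmt_4
    (J : ℝ → ℝ) (hJnonneg : ∀ t, 0 ≤ J t) (hJconv : StrictConvexOn ℝ Set.univ J)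
    (g : ℝ → ℝ) (hgmeas : Measurable g) (hgnonneg : ∀ x, 0 ≤ g x)
    (hgper : ∀ x, g (x + 2 * π) = g x) (hgint : IntegrableOn g (Set.Ioo (-π) π))
    (hgsymm : ∀ x, g x = perRearr g x) (hgdec : StrictAntiOn g (Set.Ioo 0 π))
    (u v : ℝ → ℝ) (humeas : Measurable u) (hvmeas : Measurable v)
    (hu0 : ∀ x, 0 ≤ u x) (hv0 : ∀ x, 0 ≤ v x)
    (hfin : (∫⁻ x in Set.Ioo (-π) π, ∫⁻ y in Set.Ioo (-π) π,
        ENNReal.ofReal (J (u x - v y) * g (x - y))) ≠ ⊤) :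
    ((∫⁻ x in Set.Ioo (-π) π, ∫⁻ y in Set.Ioo (-π) π,
        ENNReal.ofReal (J (symmRearr u x - symmRearr v y) * g (x - y))) =
      ∫⁻ x in Set.Ioo (-π) π, ∫⁻ y in Set.Ioo (-π) π,
        ENNReal.ofReal (J (u x - v y) * g (x - y))) ↔
      ((∃ c : ℝ, ∀ᵐ x ∂(volume.restrict (Set.Ioo (-π) π)), u x = c) ∨
        (∃ c : ℝ, ∀ᵐ y ∂(volume.restrict (Set.Ioo (-π) π)), v y = c) ∨
        ∃ z : ℝ,
          (∀ᵐ x ∂(volume : Measure ℝ), periodize u x = perRearr u (x + z)) ∧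
          (∀ᵐ y ∂(volume : Measure ℝ), periodize v y = perRearr v (y + z))) :=
  stmt_4_general J hJnonneg hJconv g hgmeas hgnonneg hgper
    (fun x ↦ by rw [hgsymm, hgsymm x, perRearr_neg hgmeas]) hgdec u v humeas hvmeas hu0 hv0 hfin
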